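/- arXiv:1611.03567 — 13 statements merged into one kernel-verified Lean document; each statement's English description precedes it below -/
import Mathlib

section
/- Let A : 𝒵 → 𝒵 be a self-adjoint positive semidefinite linear operator on a finite-dimensional real inner product space 𝒵, and consider the seminorm ‖z‖ := ⟨Az, z⟩^{1/2} on 𝒵 with dual seminorm ‖v‖_* := sup{⟨v,z⟩ : ‖z‖ ≤ 1} (valued in [0,∞]). Then ‖v‖_* is finite exactly when v lies in the image of A (i.e., dom ‖·‖_* = Im(A)), and ‖Az‖_* = ‖z‖ for every z ∈ 𝒵. -/
open RealInnerProductSpace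

/-- The dual (extended) seminorm of a seminorm `p`:
`‖v‖_* = sup { ⟪v, z⟫ : p z ≤ 1 }`, valued in `[-∞, ∞]`. -/
noncomputable def dualSN {E : Type*} [NormedAddCommGroup E] [InnerProductSpace ℝ E]
    (p : E → ℝ) (v : E) : EReal :=
  ⨆ z : {z : E // p z ≤ 1}, ((⟪v, z.1⟫ : ℝ) : EReal)

/-- For a self-adjoint positive semidefinite linear operator `A` on a
finite-dimensional real inner product space and the seminorm `‖z‖ := √⟪A z, z⟫`, the dual
seminorm is finite exactly on the image of `A`, and `‖A z‖_* = ‖z‖` for every `z`. -/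
theorem stmt0 {Z : Type*} [NormedAddCommGroup Z] [InnerProductSpace ℝ Z]
    [FiniteDimensional ℝ Z]
    (A : Z →ₗ[ℝ] Z) (hsa : ∀ x y : Z, ⟪A x, y⟫ = ⟪x, A y⟫) (hpsd : ∀ x : Z, 0 ≤ ⟪A x, x⟫) :
    (∀ v : Z, dualSN (fun z => Real.sqrt ⟪A z, z⟫) v < (⊤ : EReal) ↔ v ∈ LinearMap.range A)
      ∧ ∀ z : Z,
        dualSN (fun z => Real.sqrt ⟪A z, z⟫) (A z) = ((Real.sqrt ⟪A z, z⟫ : ℝ) : EReal) := by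
  have hcs : ∀ z w : Z, ⟪A z, w⟫ ^ 2 ≤ ⟪A z, z⟫ * ⟪A w, w⟫ := by
    intro z w
    have h := discrim_le_zero (a := ⟪A w, w⟫) (b := 2 * ⟪A z, w⟫) (c := ⟪A z, z⟫) (by
      intro t
      have h1 := hpsd (z + t • w)
      have h2 : ⟪A w, z⟫ = ⟪A z, w⟫ := by rw [hsa, real_inner_comm]
      simp only [map_add, map_smul, inner_add_left, inner_add_right, real_inner_smul_left,
        real_inner_smul_right, h2] at h1
      linarith)
    unfold discrim at h
    nlinarith
  have hsecond : ∀ z : Z,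
      dualSN (fun z => Real.sqrt ⟪A z, z⟫) (A z) = ((Real.sqrt ⟪A z, z⟫ : ℝ) : EReal) := by
    intro z
    unfold dualSN
    apply le_antisymm
    · apply iSup_le
      rintro ⟨w, hw⟩
      rw [EReal.coe_le_coe_iff]
      apply Real.le_sqrt_of_sq_le
      have hw' : ⟪A w, w⟫ ≤ 1 := by
        simpa using hw
      nlinarith [hcs z w, hpsd z]
    · rcases (hpsd z).eq_or_lt with h | h
      · refine le_trans ?_ (le_iSup _ ⟨0, by simp⟩)
        simp [← h]
      · have hs := Real.sqrt_pos.mpr h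
        have hss := Real.mul_self_sqrt h.le
        refine le_trans ?_ (le_iSup _ ⟨(Real.sqrt ⟪A z, z⟫)⁻¹ • z, ?_⟩)
        · rw [EReal.coe_le_coe_iff, real_inner_smul_right, inv_mul_eq_div, le_div_iff₀ hs, hss]
        · simp only [map_smul, real_inner_smul_left, real_inner_smul_right]
          rw [Real.sqrt_le_one]
          apply le_of_eq
          generalize Real.sqrt ⟪A z, z⟫ = s at hs hss
          rw [← hss]
          field_simp
  refine ⟨fun v => ⟨fun hv => ?_, ?_⟩, hsecond⟩
  · obtain ⟨a, ha, k, hk, hvk⟩ := (LinearMap.range A).exists_add_mem_mem_orthogonal v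
    have hAk : ∀ x, ⟪A x, k⟫ = 0 := fun x => hk (A x) ⟨x, rfl⟩
    have hak : ⟪a, k⟫ = 0 := hk a ha
    by_cases hk0 : k = 0
    · rw [hvk, hk0, add_zero]; exact ha
    · exfalso
      have hpos : 0 < ⟪k, k⟫ := real_inner_self_pos.mpr hk0
      refine hv.ne ?_
      rw [EReal.eq_top_iff_forall_lt]
      intro y
      refine lt_of_lt_of_le ?_ (le_iSup _ ⟨((y + 1) / ⟪k, k⟫) • k, ?_⟩)
      · rw [EReal.coe_lt_coe_iff, hvk]
        simp only [real_inner_smul_right, inner_add_left, hak, zero_add]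
        rw [div_mul_cancel₀ _ hpos.ne']
        linarith
      · simp only [real_inner_smul_right, hAk]
        simp
  · rintro ⟨z, rfl⟩
    rw [hsecond]
    exact EReal.coe_lt_top _
end

section
/- Let (λ_k, z_k, z̃_k, ε_k) be NE-HPE sequences for T with parameter σ, distance generating function w ∈ 𝒟_Z(m,M), and initial point z₀ ∈ Z, and set r_k := (1/λ_k)(∇w(z_{k−1}) − ∇w(z_k)). Then for every k ≥ 1 and every z ∈ Z: (i) (dw)_{z_{k−1}}(z) − (dw)_{z_k}(z) = (dw)_{z_{k−1}}(z̃_k) − (dw)_{z_k}(z̃_k) + λ_k⟨r_k, z̃_k − z⟩; (ii) (dw)_{z_{k−1}}(z) − (dw)_{z_k}(z) ≥ (1−σ)(dw)_{z_{k−1}}(z̃_k) + λ_k(⟨r_k, z̃_k − z⟩ + ε_k); and (iii) (dw)_{z₀}(z) − (dw)_{z_k}(z) ≥ (1−σ) Σ_{i=1}^{k} (dw)_{z_{i−1}}(z̃_i) + Σ_{i=1}^{k} λ_i(⟨r_i, z̃_i − z⟩ + ε_i). -/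
open RealInnerProductSpace Filter

/-- The Bregman distance `(dw)_z(z') := w(z') - w(z) - ⟪∇w(z), z' - z⟫`
associated with `w`, whose gradient is `gw`. -/
noncomputable def breg {E : Type*} [NormedAddCommGroup E] [InnerProductSpace ℝ E]
    (w : E → ℝ) (gw : E → E) (z z' : E) : ℝ :=
  w z' - w z - ⟪gw z, z' - z⟫

/-- `w ∈ 𝒟_Z(m, M)`: `w` is differentiable on `Z` with gradient `gw`, is `m`-strongly
convex with respect to the seminorm `p` on `Z`, and `gw` is `M`-Lipschitz from `p` to the
dual seminorm of `p` on `Z`. -/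
structure IsDGF {E : Type*} [NormedAddCommGroup E] [InnerProductSpace ℝ E]
    [FiniteDimensional ℝ E]
    (Z : Set E) (p : Seminorm ℝ E) (m M : ℝ) (w : E → ℝ) (gw : E → E) : Prop where
  diff : ∀ z ∈ Z, HasGradientAt w (gw z) z
  strconv : ∀ z ∈ Z, ∀ z' ∈ Z, m / 2 * (p (z - z'))^2 ≤ w z' - w z - ⟪gw z, z' - z⟫
  lips : ∀ z ∈ Z, ∀ z' ∈ Z, dualSN ⇑p (gw z - gw z') ≤ ((M * p (z - z') : ℝ) : EReal)

/-- A set-valued operator `T : E ⇉ E` is monotone. -/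
def MonoOp {E : Type*} [NormedAddCommGroup E] [InnerProductSpace ℝ E]
    (T : E → Set E) : Prop :=
  ∀ z z' t t' : E, t ∈ T z → t' ∈ T z' → 0 ≤ ⟪z - z', t - t'⟫

/-- A set-valued operator `T : E ⇉ E` is maximal monotone. -/
def MaxMonoOp {E : Type*} [NormedAddCommGroup E] [InnerProductSpace ℝ E]
    (T : E → Set E) : Prop :=
  MonoOp T ∧ ∀ T' : E → Set E, MonoOp T' → (∀ z, T z ⊆ T' z) → T' = T

/-- The ε-enlargement `T^[ε]` of a monotone operator `T`. -/
def epsEnl {E : Type*} [NormedAddCommGroup E] [InnerProductSpace ℝ E]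
    (T : E → Set E) (ε : ℝ) (z : E) : Set E :=
  {t | ∀ z' t' : E, t' ∈ T z' → -ε ≤ ⟪t - t', z - z'⟫}

/-- NE-HPE sequences `(λ_k, z_k, z̃_k, ε_k)` for `T`, with parameter `σ`, distance
generating function `w` (with gradient `gw`) and initial point `z_0 = zs 0 ∈ Z`. -/
structure NEHPE {E : Type*} [NormedAddCommGroup E] [InnerProductSpace ℝ E]
    (Z : Set E) (w : E → ℝ) (gw : E → E) (T : E → Set E) (σ : ℝ)
    (lam : ℕ → ℝ) (zs : ℕ → E) (zt : ℕ → E) (ε : ℕ → ℝ) : Prop where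
  lam_pos : ∀ k, 1 ≤ k → 0 < lam k
  zs_mem : ∀ k, zs k ∈ Z
  zt_mem : ∀ k, 1 ≤ k → zt k ∈ Z
  eps_nonneg : ∀ k, 1 ≤ k → 0 ≤ ε k
  incl : ∀ k, 1 ≤ k → (1 / lam k) • (gw (zs (k-1)) - gw (zs k)) ∈ epsEnl T (ε k) (zt k)
  err : ∀ k, 1 ≤ k →
    breg w gw (zs k) (zt k) + lam k * ε k ≤ σ * breg w gw (zs (k-1)) (zt k)

/-- Basic identities/inequalities for the NE-HPE framework. -/
theorem stmt3
    {E : Type*} [NormedAddCommGroup E] [InnerProductSpace ℝ E] [FiniteDimensional ℝ E]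
    (Z : Set E) (p : Seminorm ℝ E) (m M : ℝ) (hm : 0 < m) (hmM : m ≤ M)
    (w : E → ℝ) (gw : E → E) (hw : IsDGF Z p m M w gw)
    (T : E → Set E) (hT : MaxMonoOp T)
    (hdom : ∀ z, (T z).Nonempty → z ∈ Z) (hsol : ∃ z, 0 ∈ T z)
    (σ : ℝ) (hσ0 : 0 ≤ σ) (hσ1 : σ ≤ 1)
    (lam : ℕ → ℝ) (zs zt : ℕ → E) (ε : ℕ → ℝ)
    (hseq : NEHPE Z w gw T σ lam zs zt ε)
    (r : ℕ → E) (hr : ∀ k, r k = (1 / lam k) • (gw (zs (k - 1)) - gw (zs k)))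
    (k : ℕ) (hk : 1 ≤ k) (z : E) (hz : z ∈ Z) :
    (breg w gw (zs (k - 1)) z - breg w gw (zs k) z
        = breg w gw (zs (k - 1)) (zt k) - breg w gw (zs k) (zt k)
          + lam k * ⟪r k, zt k - z⟫)
    ∧ ((1 - σ) * breg w gw (zs (k - 1)) (zt k) + lam k * (⟪r k, zt k - z⟫ + ε k)
        ≤ breg w gw (zs (k - 1)) z - breg w gw (zs k) z)
    ∧ ((1 - σ) * ∑ i ∈ Finset.Icc 1 k, breg w gw (zs (i - 1)) (zt i)
          + ∑ i ∈ Finset.Icc 1 k, lam i * (⟪r i, zt i - z⟫ + ε i)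
        ≤ breg w gw (zs 0) z - breg w gw (zs k) z) := by
  have h1 : ∀ k, 1 ≤ k → breg w gw (zs (k - 1)) z - breg w gw (zs k) z
        = breg w gw (zs (k - 1)) (zt k) - breg w gw (zs k) (zt k)
          + lam k * ⟪r k, zt k - z⟫ := by
    intro k hk
    have hl : lam k ≠ 0 := (hseq.lam_pos k hk).ne'
    have e : lam k * ⟪r k, zt k - z⟫ = ⟪gw (zs (k - 1)) - gw (zs k), zt k - z⟫ := by
      rw [hr k, real_inner_smul_left, ← mul_assoc, mul_one_div_cancel hl, one_mul]
    rw [e]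
    simp only [breg, inner_sub_left, inner_sub_right]
    ring
  have h2 : ∀ k, 1 ≤ k →
      (1 - σ) * breg w gw (zs (k - 1)) (zt k) + lam k * (⟪r k, zt k - z⟫ + ε k)
        ≤ breg w gw (zs (k - 1)) z - breg w gw (zs k) z := by
    intro k hk
    have a := h1 k hk
    have b := hseq.err k hk
    rw [a]
    linarith
  refine ⟨h1 k hk, h2 k hk, ?_⟩
  clear hk
  induction k with
  | zero => simp
  | succ n ih =>
    have a := h2 (n + 1) (by omega)
    rw [Finset.sum_Icc_succ_top (by omega), Finset.sum_Icc_succ_top (by omega)]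
    simp only [Nat.add_sub_cancel] at a ⊢
    linarith
end

section
/- Let (λ_k, z_k, z̃_k, ε_k) be NE-HPE sequences for T with parameter σ, distance generating function w ∈ 𝒟_Z(m,M), and initial point z₀ ∈ Z, and set r_k := (1/λ_k)(∇w(z_{k−1}) − ∇w(z_k)). Then for every k ≥ 1 and every z* with 0 ∈ T(z*): (dw)_{z_{k−1}}(z*) − (dw)_{z_k}(z*) − (1−σ)(dw)_{z_{k−1}}(z̃_k) ≥ λ_k[⟨r_k, z̃_k − z*⟩ + ε_k] ≥ 0. As a consequence: (a) the sequence k ↦ (dw)_{z_k}(z*) is non-increasing; (b) λ_k[⟨r_k, z̃_k − z*⟩ + ε_k] → 0 as k → ∞; and (c) (1−σ) Σ_{i=1}^{k} (dw)_{z_{i−1}}(z̃_i) ≤ (dw)_{z₀}(z*) for every k. -/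
open RealInnerProductSpace Filter

/-- Key estimate with respect to a solution, monotonicity of the
Bregman distances, vanishing of the residual terms, and a summability bound. -/
theorem stmt4
    {E : Type*} [NormedAddCommGroup E] [InnerProductSpace ℝ E] [FiniteDimensional ℝ E]
    (Z : Set E) (p : Seminorm ℝ E) (m M : ℝ) (hm : 0 < m) (hmM : m ≤ M)
    (w : E → ℝ) (gw : E → E) (hw : IsDGF Z p m M w gw)
    (T : E → Set E) (hT : MaxMonoOp T)
    (hdom : ∀ z, (T z).Nonempty → z ∈ Z) (hsol : ∃ z, 0 ∈ T z)
    (σ : ℝ) (hσ0 : 0 ≤ σ) (hσ1 : σ ≤ 1)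
    (lam : ℕ → ℝ) (zs zt : ℕ → E) (ε : ℕ → ℝ)
    (hseq : NEHPE Z w gw T σ lam zs zt ε)
    (r : ℕ → E) (hr : ∀ k, r k = (1 / lam k) • (gw (zs (k - 1)) - gw (zs k)))
    (zstar : E) (hzstar : (0 : E) ∈ T zstar) :
    (∀ k, 1 ≤ k →
        lam k * (⟪r k, zt k - zstar⟫ + ε k)
          ≤ breg w gw (zs (k - 1)) zstar - breg w gw (zs k) zstar
            - (1 - σ) * breg w gw (zs (k - 1)) (zt k)
        ∧ 0 ≤ lam k * (⟪r k, zt k - zstar⟫ + ε k))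
    ∧ Antitone (fun k : ℕ => breg w gw (zs k) zstar)
    ∧ Tendsto (fun k : ℕ => lam k * (⟪r k, zt k - zstar⟫ + ε k)) atTop (nhds 0)
    ∧ ∀ k, 1 ≤ k →
        (1 - σ) * ∑ i ∈ Finset.Icc 1 k, breg w gw (zs (i - 1)) (zt i)
          ≤ breg w gw (zs 0) zstar := by
  have hzZ : zstar ∈ Z := hdom _ ⟨0, hzstar⟩
  have nn : ∀ x ∈ Z, ∀ y ∈ Z, 0 ≤ breg w gw x y := by
    intro x hx y hy
    have h := hw.strconv x hx y hy
    have h2 : 0 ≤ m / 2 * (p (x - y))^2 := by positivity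
    unfold breg
    linarith
  have key : ∀ k, 1 ≤ k →
        lam k * (⟪r k, zt k - zstar⟫ + ε k)
          ≤ breg w gw (zs (k - 1)) zstar - breg w gw (zs k) zstar
            - (1 - σ) * breg w gw (zs (k - 1)) (zt k)
        ∧ 0 ≤ lam k * (⟪r k, zt k - zstar⟫ + ε k) := by
    intro k hk
    have hl := hseq.lam_pos k hk
    have hin := hseq.incl k hk zstar 0 hzstar
    rw [← hr k, sub_zero] at hin
    refine ⟨?_, mul_nonneg hl.le (by linarith)⟩
    have herr := hseq.err k hk
    have hlr : lam k * ⟪r k, zt k - zstar⟫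
        = ⟪gw (zs (k - 1)) - gw (zs k), zt k - zstar⟫ := by
      rw [hr k, real_inner_smul_left, ← mul_assoc, mul_one_div_cancel hl.ne', one_mul]
    have hid : breg w gw (zs (k - 1)) zstar - breg w gw (zs k) zstar
        = breg w gw (zs (k - 1)) (zt k) - breg w gw (zs k) (zt k)
          + ⟪gw (zs (k - 1)) - gw (zs k), zt k - zstar⟫ := by
      simp only [breg, inner_sub_left, inner_sub_right]
      ring
    rw [mul_add, hlr, hid]
    linarith
  have anti : Antitone (fun k : ℕ => breg w gw (zs k) zstar) := by
    apply antitone_nat_of_succ_le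
    intro n
    obtain ⟨h1, h2⟩ := key (n + 1) (by omega)
    simp only [Nat.add_sub_cancel] at h1
    have h3 := mul_nonneg (sub_nonneg.2 hσ1)
      (nn _ (hseq.zs_mem n) _ (hseq.zt_mem (n + 1) (by omega)))
    linarith
  refine ⟨key, anti, ?_, ?_⟩
  · rw [← tendsto_add_atTop_iff_nat 1]
    have hlim := tendsto_atTop_ciInf anti
      ⟨0, by rintro _ ⟨n, rfl⟩; exact nn _ (hseq.zs_mem n) _ hzZ⟩
    have hd := hlim.sub ((tendsto_add_atTop_iff_nat 1).2 hlim)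
    rw [sub_self] at hd
    refine squeeze_zero (fun n => (key (n + 1) (by omega)).2) (fun n => ?_) hd
    have h1 := (key (n + 1) (by omega)).1
    simp only [Nat.add_sub_cancel] at h1
    have h3 := mul_nonneg (sub_nonneg.2 hσ1)
      (nn _ (hseq.zs_mem n) _ (hseq.zt_mem (n + 1) (by omega)))
    linarith
  · intro k _
    have hs : (1 - σ) * ∑ i ∈ Finset.Icc 1 k, breg w gw (zs (i - 1)) (zt i)
          ≤ breg w gw (zs 0) zstar - breg w gw (zs k) zstar := by
      induction k with
      | zero => simp
      | succ n ih =>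
        rw [Finset.sum_Icc_succ_top (by omega), mul_add]
        obtain ⟨h1, h2⟩ := key (n + 1) (by omega)
        simp only [Nat.add_sub_cancel] at h1 ⊢
        rcases Nat.eq_zero_or_pos n with h | h
        · subst h
          simp at h1 h2 ⊢
          linarith
        · have := ih h
          linarith
    have := nn _ (hseq.zs_mem k) _ hzZ
    linarith
end

section
/- Let (λ_k, z_k, z̃_k, ε_k) be NE-HPE sequences for T with parameter σ, distance generating function w ∈ 𝒟_Z(m,M), and initial point z₀ ∈ Z, and set r_k := (1/λ_k)(∇w(z_{k−1}) − ∇w(z_k)), τ := √2·M/√m, and θ_i := max{ λ_i²‖r_i‖_*² / (τ²(1+√σ)²), λ_i ε_i / σ } for i ≥ 1 (with the second term interpreted as 0 when σ = 0 and ε_i = 0). Then (1−σ) Σ_{i=1}^{k} θ_i ≤ (dw)_0 for every k ≥ 1, where (dw)_0 := inf{(dw)_{z₀}(z*) : 0 ∈ T(z*)}. -/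
open RealInnerProductSpace Filter

theorem le_of_sq_le_sq_aux {x y : ℝ} (h : x ^ 2 ≤ y ^ 2) (hy : 0 ≤ y) : x ≤ y :=
  abs_le_of_sq_le_sq' h hy |>.2

theorem aux_real (m M τ σ a b u v d : ℝ) (hm : 0 < m) (hM : 0 < M) (hσ : 0 ≤ σ)
    (hτ : τ = Real.sqrt 2 * M / Real.sqrt m) (hu : 0 ≤ u) (hv : 0 ≤ v) (ha : m / 2 * u ^ 2 ≤ a)
    (hb : m / 2 * v ^ 2 ≤ b) (hba : b ≤ σ * a) (hd0 : 0 ≤ d) (hd : d ≤ M * (u + v)) :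
    d ^ 2 / (τ ^ 2 * (1 + Real.sqrt σ) ^ 2) ≤ a := by
  have hsm : 0 < Real.sqrt m := Real.sqrt_pos.2 hm
  have hτpos : 0 < τ := by rw [hτ]; positivity
  have hs := Real.sqrt_nonneg σ
  have ha0 : 0 ≤ a := le_trans (by positivity) ha
  have hτ2 : τ ^ 2 * (m / 2) = M ^ 2 := by
    rw [hτ, div_pow, mul_pow, Real.sq_sqrt hm.le, Real.sq_sqrt (by norm_num)]
    field_simp
  have h1 : M * u ≤ τ * Real.sqrt a := by
    apply le_of_sq_le_sq_aux _ (by positivity)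
    rw [mul_pow, mul_pow, Real.sq_sqrt ha0, ← hτ2, mul_assoc]
    gcongr
  have h2 : M * v ≤ τ * (Real.sqrt σ * Real.sqrt a) := by
    apply le_of_sq_le_sq_aux _ (by positivity)
    rw [mul_pow, mul_pow, mul_pow, Real.sq_sqrt ha0, Real.sq_sqrt hσ, ← hτ2, mul_assoc]
    exact mul_le_mul_of_nonneg_left (hb.trans hba) (by positivity)
  have h3 : d ≤ τ * (1 + Real.sqrt σ) * Real.sqrt a := by nlinarith
  rw [div_le_iff₀ (by positivity)]
  calc d ^ 2 ≤ (τ * (1 + Real.sqrt σ) * Real.sqrt a) ^ 2 := by gcongr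
    _ = _ := by rw [mul_pow, mul_pow, Real.sq_sqrt ha0]; ring

/-- With τ := √2·M/√m and θ_i := max{λ_i²‖r_i‖_*²/(τ²(1+√σ)²), λ_iε_i/σ}
(the second term being 0 when σ = 0 and ε_i = 0, matching the convention x/0 = 0),
one has (1−σ) Σ_{i=1}^k θ_i ≤ (dw)_0 for every k ≥ 1. -/
theorem stmt5
    {E : Type*} [NormedAddCommGroup E] [InnerProductSpace ℝ E] [FiniteDimensional ℝ E]
    (Z : Set E) (p : Seminorm ℝ E) (m M : ℝ) (hm : 0 < m) (hmM : m ≤ M)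
    (w : E → ℝ) (gw : E → E) (hw : IsDGF Z p m M w gw)
    (T : E → Set E) (hT : MaxMonoOp T)
    (hdom : ∀ z, (T z).Nonempty → z ∈ Z) (hsol : ∃ z, 0 ∈ T z)
    (σ : ℝ) (hσ0 : 0 ≤ σ) (hσ1 : σ ≤ 1)
    (lam : ℕ → ℝ) (zs zt : ℕ → E) (ε : ℕ → ℝ)
    (hseq : NEHPE Z w gw T σ lam zs zt ε)
    (r : ℕ → E) (hr : ∀ k, r k = (1 / lam k) • (gw (zs (k - 1)) - gw (zs k)))
    (τ : ℝ) (hτ : τ = Real.sqrt 2 * M / Real.sqrt m)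
    (dw0 : ℝ) (hdw0 : dw0 = sInf (breg w gw (zs 0) '' {z | (0 : E) ∈ T z}))
    (θf : ℕ → EReal)
    (hθf : ∀ i, θf i
      = max
          (((lam i ^ 2 : ℝ) : EReal) * (dualSN ⇑p (r i))^2
            / ((τ ^ 2 * (1 + Real.sqrt σ) ^ 2 : ℝ) : EReal))
          ((lam i * ε i / σ : ℝ) : EReal)) :
    ∀ k, 1 ≤ k →
      ((1 - σ : ℝ) : EReal) * ∑ i ∈ Finset.Icc 1 k, θf i ≤ ((dw0 : ℝ) : EReal) := by
  have hb0 : ∀ x ∈ Z, ∀ y ∈ Z, m / 2 * (p (x - y)) ^ 2 ≤ breg w gw x y :=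
    fun x hx y hy => hw.strconv x hx y hy
  have hbn : ∀ x ∈ Z, ∀ y ∈ Z, 0 ≤ breg w gw x y :=
    fun x hx y hy => le_trans (by positivity) (hb0 x hx y hy)
  have hM : 0 < M := lt_of_lt_of_le hm hmM
  have hθ : ∀ i, 1 ≤ i → θf i ≤ ((breg w gw (zs (i - 1)) (zt i) : ℝ) : EReal) := by
    intro i hi
    have hl := hseq.lam_pos i hi
    have hz := hseq.zs_mem i
    have hz' := hseq.zs_mem (i - 1)
    have ht := hseq.zt_mem i hi
    have he := hseq.eps_nonneg i hi
    have herr := hseq.err i hi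
    have hB := hbn _ hz _ ht
    have hA := hbn _ hz' _ ht
    have hle : 0 ≤ lam i * ε i := by positivity
    rw [hθf]
    apply max_le
    · set P := p (zs (i - 1) - zs i) with hP
      have hup : dualSN ⇑p (r i) ≤ ((M * P / lam i : ℝ) : EReal) := by
        apply iSup_le
        intro x
        have h1 : ((⟪gw (zs (i - 1)) - gw (zs i), x.1⟫ : ℝ) : EReal) ≤ ((M * P : ℝ) : EReal) :=
          le_trans (le_iSup (fun z : {z : E // p z ≤ 1} =>
            ((⟪gw (zs (i - 1)) - gw (zs i), z.1⟫ : ℝ) : EReal)) x) (hw.lips _ hz' _ hz)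
        rw [EReal.coe_le_coe_iff] at h1 ⊢
        rw [hr, real_inner_smul_left, one_div, inv_mul_eq_div]
        gcongr
      have hlo : (0 : EReal) ≤ dualSN ⇑p (r i) := by
        have := le_iSup (fun z : {z : E // p z ≤ 1} => ((⟪r i, z.1⟫ : ℝ) : EReal)) ⟨0, by simp⟩
        simpa [dualSN] using this
      have hnt : dualSN ⇑p (r i) ≠ ⊤ := ne_top_of_le_ne_top (EReal.coe_ne_top _) hup
      have hnb : dualSN ⇑p (r i) ≠ ⊥ := fun h => by rw [h] at hlo; simp at hlo
      obtain ⟨d, hd⟩ : ∃ d : ℝ, dualSN ⇑p (r i) = (d : EReal) :=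
        ⟨_, (EReal.coe_toReal hnt hnb).symm⟩
      rw [hd] at hup hlo ⊢
      rw [EReal.coe_le_coe_iff] at hup
      have hd0 : 0 ≤ d := by exact_mod_cast hlo
      rw [← EReal.coe_pow, ← EReal.coe_mul, ← EReal.coe_div, EReal.coe_le_coe_iff, ← mul_pow]
      have htri : P ≤ p (zs (i - 1) - zt i) + p (zs i - zt i) := by
        rw [hP, map_sub_rev p (zs i) (zt i)]
        have := map_add_le_add p (zs (i - 1) - zt i) (zt i - zs i)
        simpa using this
      refine aux_real m M τ σ _ _ _ _ _ hm hM hσ0 hτ (apply_nonneg p _) (apply_nonneg p _)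
        (hb0 _ hz' _ ht) (hb0 _ hz _ ht) (by linarith) (by positivity) ?_
      rw [le_div_iff₀ hl] at hup
      nlinarith
    · rw [EReal.coe_le_coe_iff]
      rcases hσ0.eq_or_lt with h | h
      · rw [← h, div_zero]; exact hA
      · rw [div_le_iff₀ h]; linarith
  have hstep : ∀ z, (0 : E) ∈ T z → ∀ k,
      (1 - σ) * ∑ i ∈ Finset.Icc 1 k, breg w gw (zs (i - 1)) (zt i) + breg w gw (zs k) z
        ≤ breg w gw (zs 0) z := by
    intro z hz k
    induction k with
    | zero => simp
    | succ k ih =>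
      rw [Finset.sum_Icc_succ_top (by omega)]
      have hl := hseq.lam_pos (k + 1) (by omega)
      have herr := hseq.err (k + 1) (by omega)
      have hin := hseq.incl (k + 1) (by omega) z 0 hz
      simp only [Nat.add_sub_cancel] at herr hin ⊢
      rw [sub_zero, real_inner_smul_left, one_div, inv_mul_eq_div, le_div_iff₀ hl] at hin
      have key : breg w gw (zs k) z - breg w gw (zs (k + 1)) z
          = breg w gw (zs k) (zt (k + 1)) - breg w gw (zs (k + 1)) (zt (k + 1))
            + ⟪gw (zs k) - gw (zs (k + 1)), zt (k + 1) - z⟫ := by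
        simp only [breg, inner_sub_left, inner_sub_right]; ring
      nlinarith
  intro k hk
  have hreal : (1 - σ) * ∑ i ∈ Finset.Icc 1 k, breg w gw (zs (i - 1)) (zt i) ≤ dw0 := by
    rw [hdw0]
    apply le_csInf
    · obtain ⟨z, hz⟩ := hsol
      exact ⟨_, z, hz, rfl⟩
    · rintro _ ⟨z, hz, rfl⟩
      have h1 := hstep z hz k
      have h2 := hbn _ (hseq.zs_mem k) z (hdom z ⟨0, hz⟩)
      linarith
  have hsum : ∑ i ∈ Finset.Icc 1 k, θf i
      ≤ ((∑ i ∈ Finset.Icc 1 k, breg w gw (zs (i - 1)) (zt i) : ℝ) : EReal) := by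
    have hc : ∀ s : Finset ℕ, ((∑ i ∈ s, breg w gw (zs (i - 1)) (zt i) : ℝ) : EReal)
        = ∑ i ∈ s, ((breg w gw (zs (i - 1)) (zt i) : ℝ) : EReal) := by
      intro s
      induction s using Finset.induction_on with
      | empty => simp
      | insert a s ha ih => rw [Finset.sum_insert ha, Finset.sum_insert ha, EReal.coe_add, ih]
    rw [hc]
    exact Finset.sum_le_sum fun i hi => hθ i (Finset.mem_Icc.1 hi).1
  have h1σ : (0 : EReal) ≤ ((1 - σ : ℝ) : EReal) := by
    exact_mod_cast sub_nonneg.2 hσ1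
  calc _ ≤ ((1 - σ : ℝ) : EReal)
        * ((∑ i ∈ Finset.Icc 1 k, breg w gw (zs (i - 1)) (zt i) : ℝ) : EReal) :=
        mul_le_mul_of_nonneg_left hsum h1σ
    _ ≤ _ := by rw [← EReal.coe_mul, EReal.coe_le_coe_iff]; exact hreal
end

section
/- (Pointwise convergence, constant-stepsize bound.) Let (λ_k, z_k, z̃_k, ε_k) be NE-HPE sequences for T with parameter σ < 1, distance generating function w ∈ 𝒟_Z(m,M), and initial point z₀ ∈ Z, set r_k := (1/λ_k)(∇w(z_{k−1}) − ∇w(z_k)), τ := √2·M/√m and (dw)_0 := inf{(dw)_{z₀}(z*) : 0 ∈ T(z*)}, and assume λ̲ := inf_k λ_k > 0. Then for every k ≥ 1 there exists an index i ≤ k such that ‖r_i‖_* ≤ τ(1+√σ) √( (dw)_0 / (1−σ) · λ̲⁻¹ / Σ_{j=1}^{k} λ_j ) ≤ (τ(1+√σ)/(λ̲√k)) √((dw)_0/(1−σ)) and ε_i ≤ σ(dw)_0 / ((1−σ) Σ_{j=1}^{k} λ_j) ≤ σ(dw)_0/((1−σ) λ̲ k). -/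
open RealInnerProductSpace Filter

/-- Pointwise convergence: constant-stepsize bound (σ < 1, inf λ_k > 0). -/
theorem stmt6
    {E : Type*} [NormedAddCommGroup E] [InnerProductSpace ℝ E] [FiniteDimensional ℝ E]
    (Z : Set E) (p : Seminorm ℝ E) (m M : ℝ) (hm : 0 < m) (hmM : m ≤ M)
    (w : E → ℝ) (gw : E → E) (hw : IsDGF Z p m M w gw)
    (T : E → Set E) (hT : MaxMonoOp T)
    (hdom : ∀ z, (T z).Nonempty → z ∈ Z) (hsol : ∃ z, 0 ∈ T z)
    (σ : ℝ) (hσ0 : 0 ≤ σ) (hσ1 : σ ≤ 1)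
    (lam : ℕ → ℝ) (zs zt : ℕ → E) (ε : ℕ → ℝ)
    (hseq : NEHPE Z w gw T σ lam zs zt ε)
    (r : ℕ → E) (hr : ∀ k, r k = (1 / lam k) • (gw (zs (k - 1)) - gw (zs k)))
    (hσlt : σ < 1)
    (τ : ℝ) (hτ : τ = Real.sqrt 2 * M / Real.sqrt m)
    (dw0 : ℝ) (hdw0 : dw0 = sInf (breg w gw (zs 0) '' {z | (0 : E) ∈ T z}))
    (lamlow : ℝ) (hlamlow : lamlow = sInf {x : ℝ | ∃ k, 1 ≤ k ∧ x = lam k})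
    (hlampos : 0 < lamlow) :
    ∀ k : ℕ, 1 ≤ k → ∃ i, 1 ≤ i ∧ i ≤ k ∧
      dualSN ⇑p (r i)
        ≤ ((τ * (1 + Real.sqrt σ) *
            Real.sqrt (dw0 / (1 - σ) * (lamlow⁻¹ / ∑ j ∈ Finset.Icc 1 k, lam j)) : ℝ) : EReal)
      ∧ τ * (1 + Real.sqrt σ) *
            Real.sqrt (dw0 / (1 - σ) * (lamlow⁻¹ / ∑ j ∈ Finset.Icc 1 k, lam j))
          ≤ τ * (1 + Real.sqrt σ) / (lamlow * Real.sqrt k) * Real.sqrt (dw0 / (1 - σ))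
      ∧ ε i ≤ σ * dw0 / (1 - σ) * (1 / ∑ j ∈ Finset.Icc 1 k, lam j)
      ∧ σ * dw0 / (1 - σ) * (1 / ∑ j ∈ Finset.Icc 1 k, lam j)
          ≤ σ * dw0 / ((1 - σ) * lamlow * k) := by
  intro k hk
  have hM : 0 < M := lt_of_lt_of_le hm hmM
  have h1σ : 0 < 1 - σ := by linarith
  set d : ℕ → ℝ := fun j => breg w gw (zs (j-1)) (zt j) with hd
  have hlamge : ∀ j, 1 ≤ j → lamlow ≤ lam j := by
    intro j hj
    rw [hlamlow]
    refine csInf_le ⟨0, ?_⟩ ⟨j, hj, rfl⟩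
    rintro x ⟨l, hl, rfl⟩
    exact (hseq.lam_pos l hl).le
  have hd0 : ∀ j, 1 ≤ j → 0 ≤ d j := by
    intro j hj
    have := hw.strconv _ (hseq.zs_mem (j-1)) _ (hseq.zt_mem j hj)
    simp only [hd, breg]
    refine le_trans (by positivity) this
  -- one step
  have hstep : ∀ x, (0 : E) ∈ T x → ∀ j, 1 ≤ j →
      (1 - σ) * d j ≤ breg w gw (zs (j-1)) x - breg w gw (zs j) x := by
    intro x hx j hj
    have hl := hseq.lam_pos j hj
    have h1 := hseq.incl j hj x 0 hx
    have h2 := hseq.err j hj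
    rw [sub_zero, real_inner_smul_left] at h1
    have h3 : -(lam j * ε j) ≤ ⟪gw (zs (j-1)) - gw (zs j), zt j - x⟫ := by
      have := mul_le_mul_of_nonneg_left h1 hl.le
      rw [← mul_assoc, mul_one_div_cancel hl.ne', one_mul] at this
      linarith
    simp only [hd]
    simp only [breg, inner_sub_left, inner_sub_right] at *
    linarith
  have hsum : ∀ x, (0 : E) ∈ T x → ∀ n : ℕ,
      (1 - σ) * ∑ j ∈ Finset.Icc 1 n, d j ≤ breg w gw (zs 0) x - breg w gw (zs n) x := by
    intro x hx n
    induction n with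
    | zero => simp
    | succ n ih =>
      rw [Finset.sum_Icc_succ_top (by omega), mul_add]
      have := hstep x hx (n+1) (by omega)
      rw [Nat.add_sub_cancel] at this
      linarith
  have hsumd : (1 - σ) * ∑ j ∈ Finset.Icc 1 k, d j ≤ dw0 := by
    rw [hdw0]
    obtain ⟨x, hx⟩ := hsol
    refine le_csInf ⟨_, x, hx, rfl⟩ ?_
    rintro _ ⟨y, hy, rfl⟩
    have h1 := hsum y hy k
    have h2 := hw.strconv _ (hseq.zs_mem k) _ (hdom y ⟨0, hy⟩)
    have h3 : 0 ≤ breg w gw (zs k) y := le_trans (by positivity) h2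
    linarith
  obtain ⟨i, hi, hmin⟩ := Finset.exists_min_image (Finset.Icc 1 k) (fun j => d j / lam j)
    ⟨1, by simp [hk]⟩
  rw [Finset.mem_Icc] at hi
  have hli := hseq.lam_pos i hi.1
  have hdi := hd0 i hi.1
  set S := ∑ j ∈ Finset.Icc 1 k, lam j with hS
  have hSk : lamlow * k ≤ S := by
    have : ∑ j ∈ Finset.Icc 1 k, lamlow ≤ S :=
      Finset.sum_le_sum fun j hj => hlamge j (Finset.mem_Icc.1 hj).1
    simp at this
    linarith
  have hkpos : (0 : ℝ) < k := by exact_mod_cast hk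
  have hSpos : 0 < S := lt_of_lt_of_le (by positivity) hSk
  have hq : d i / lam i * S ≤ ∑ j ∈ Finset.Icc 1 k, d j := by
    rw [hS, Finset.mul_sum]
    refine Finset.sum_le_sum fun j hj => ?_
    have h1 := hmin j hj
    have hl := hseq.lam_pos j (Finset.mem_Icc.1 hj).1
    exact (le_div_iff₀ hl).1 h1
  have hq0 : 0 ≤ d i / lam i := by positivity
  have hdw : 0 ≤ dw0 := le_trans (mul_nonneg h1σ.le (le_trans (by positivity) hq)) hsumd
  have hq2 : d i / lam i ≤ dw0 / (1 - σ) * (1 / S) := by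
    rw [← div_eq_mul_one_div, le_div_iff₀ hSpos]
    refine hq.trans ?_
    rw [le_div_iff₀ h1σ]
    linarith
  have hτ0 : 0 ≤ τ := by rw [hτ]; positivity
  have hεi := hseq.err i hi.1
  have hnn : ∀ a ∈ Z, ∀ b ∈ Z, p (a - b) ≤ Real.sqrt 2 / Real.sqrt m * Real.sqrt (breg w gw a b) := by
    intro a ha b hb
    have h := hw.strconv a ha b hb
    rw [← Real.sqrt_div (by norm_num), ← Real.sqrt_mul (by positivity)]
    apply Real.le_sqrt_of_sq_le
    simp only [breg]
    rw [div_mul_eq_mul_div, le_div_iff₀ hm]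
    linarith
  refine ⟨i, hi.1, hi.2, ?_, ?_, ?_, ?_⟩
  · have hA : p (zs (i-1) - zs i) ≤ Real.sqrt 2 / Real.sqrt m * ((1 + Real.sqrt σ) * Real.sqrt (d i)) := by
      have e1 := hnn _ (hseq.zs_mem (i-1)) _ (hseq.zt_mem i hi.1)
      have e2 := hnn _ (hseq.zs_mem i) _ (hseq.zt_mem i hi.1)
      have e3 : Real.sqrt (breg w gw (zs i) (zt i)) ≤ Real.sqrt σ * Real.sqrt (d i) := by
        rw [← Real.sqrt_mul hσ0]
        apply Real.sqrt_le_sqrt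
        have := mul_nonneg hli.le (hseq.eps_nonneg i hi.1)
        simp only [hd]
        linarith
      have e4 : p (zs (i-1) - zs i) ≤ p (zs (i-1) - zt i) + p (zs i - zt i) := by
        have := map_sub_le_add p (zs (i-1) - zt i) (zs i - zt i)
        simpa using this
      have e5 := mul_le_mul_of_nonneg_left e3 (show 0 ≤ Real.sqrt 2 / Real.sqrt m by positivity)
      have e6 : Real.sqrt (breg w gw (zs (i-1)) (zt i)) = Real.sqrt (d i) := rfl
      rw [e6] at e1
      linarith
    have hB : Real.sqrt (d i) / lam i ≤ Real.sqrt (dw0 / (1 - σ) * (lamlow⁻¹ / S)) := by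
      apply Real.le_sqrt_of_sq_le
      rw [div_pow, Real.sq_sqrt hdi]
      calc d i / lam i ^ 2 = d i / lam i * (lam i)⁻¹ := by field_simp
        _ ≤ (dw0 / (1 - σ) * (1 / S)) * lamlow⁻¹ :=
          mul_le_mul hq2 (inv_anti₀ hlampos (hlamge i hi.1)) (by positivity) (by positivity)
        _ = _ := by ring
    refine iSup_le fun z => ?_
    rw [EReal.coe_le_coe_iff, hr, real_inner_smul_left]
    have h1 : ((⟪gw (zs (i-1)) - gw (zs i), z.1⟫ : ℝ) : EReal) ≤ ((M * p (zs (i-1) - zs i) : ℝ) : EReal) :=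
      le_trans (le_iSup (fun z : {z : E // p z ≤ 1} =>
        ((⟪gw (zs (i-1)) - gw (zs i), z.1⟫ : ℝ) : EReal)) z)
        (hw.lips _ (hseq.zs_mem (i-1)) _ (hseq.zs_mem i))
    rw [EReal.coe_le_coe_iff] at h1
    calc 1 / lam i * ⟪gw (zs (i-1)) - gw (zs i), z.1⟫
        ≤ 1 / lam i * (M * (Real.sqrt 2 / Real.sqrt m * ((1 + Real.sqrt σ) * Real.sqrt (d i)))) := by
          refine mul_le_mul_of_nonneg_left (h1.trans ?_) (by positivity)
          exact mul_le_mul_of_nonneg_left hA hM.le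
      _ = τ * (1 + Real.sqrt σ) * (Real.sqrt (d i) / lam i) := by rw [hτ]; ring
      _ ≤ _ := mul_le_mul_of_nonneg_left hB (by positivity)
  · have hC : Real.sqrt (lamlow⁻¹ / S) ≤ 1 / (lamlow * Real.sqrt k) := by
      apply Real.sqrt_le_iff.2
      refine ⟨by positivity, ?_⟩
      rw [div_pow, mul_pow, Real.sq_sqrt hkpos.le, inv_eq_one_div, div_div, one_pow]
      refine one_div_le_one_div_of_le (by positivity) ?_
      nlinarith
    rw [Real.sqrt_mul (by positivity)]
    calc τ * (1 + Real.sqrt σ) * (Real.sqrt (dw0 / (1 - σ)) * Real.sqrt (lamlow⁻¹ / S))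
        ≤ τ * (1 + Real.sqrt σ) * (Real.sqrt (dw0 / (1 - σ)) * (1 / (lamlow * Real.sqrt k))) := by
          gcongr
      _ = _ := by ring
  · have h1 : lam i * ε i ≤ σ * d i := by
      have h2 := hw.strconv _ (hseq.zs_mem i) _ (hseq.zt_mem i hi.1)
      have h3 : 0 ≤ breg w gw (zs i) (zt i) := le_trans (by positivity) h2
      simp only [hd]
      linarith
    calc ε i ≤ σ * d i / lam i := by rw [le_div_iff₀ hli]; linarith
      _ = σ * (d i / lam i) := by ring
      _ ≤ σ * (dw0 / (1 - σ) * (1 / S)) := mul_le_mul_of_nonneg_left hq2 hσ0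
      _ = _ := by ring
  · rw [div_mul_div_comm, mul_one]
    refine div_le_div_of_nonneg_left (by positivity) (by positivity) ?_
    rw [mul_assoc]
    exact mul_le_mul_of_nonneg_left hSk h1σ.le
end

section
/- (Pointwise convergence, square-summed bound.) Let (λ_k, z_k, z̃_k, ε_k) be NE-HPE sequences for T with parameter σ < 1, distance generating function w ∈ 𝒟_Z(m,M), and initial point z₀ ∈ Z, set r_k := (1/λ_k)(∇w(z_{k−1}) − ∇w(z_k)), τ := √2·M/√m and (dw)_0 := inf{(dw)_{z₀}(z*) : 0 ∈ T(z*)}. Then for every k ≥ 1 there exists an index i ≤ k such that ‖r_i‖_* ≤ τ(1+√σ) √( (dw)_0 / ((1−σ) Σ_{j=1}^{k} λ_j²) ) and ε_i ≤ σ(dw)_0 λ_i / ((1−σ) Σ_{j=1}^{k} λ_j²). -/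
open RealInnerProductSpace Filter

/-- Pointwise convergence: square-summed bound (σ < 1). -/
theorem stmt7
    {E : Type*} [NormedAddCommGroup E] [InnerProductSpace ℝ E] [FiniteDimensional ℝ E]
    (Z : Set E) (p : Seminorm ℝ E) (m M : ℝ) (hm : 0 < m) (hmM : m ≤ M)
    (w : E → ℝ) (gw : E → E) (hw : IsDGF Z p m M w gw)
    (T : E → Set E) (hT : MaxMonoOp T)
    (hdom : ∀ z, (T z).Nonempty → z ∈ Z) (hsol : ∃ z, 0 ∈ T z)
    (σ : ℝ) (hσ0 : 0 ≤ σ) (hσ1 : σ ≤ 1)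
    (lam : ℕ → ℝ) (zs zt : ℕ → E) (ε : ℕ → ℝ)
    (hseq : NEHPE Z w gw T σ lam zs zt ε)
    (r : ℕ → E) (hr : ∀ k, r k = (1 / lam k) • (gw (zs (k - 1)) - gw (zs k)))
    (hσlt : σ < 1)
    (τ : ℝ) (hτ : τ = Real.sqrt 2 * M / Real.sqrt m)
    (dw0 : ℝ) (hdw0 : dw0 = sInf (breg w gw (zs 0) '' {z | (0 : E) ∈ T z})) :
    ∀ k : ℕ, 1 ≤ k → ∃ i, 1 ≤ i ∧ i ≤ k ∧
      dualSN ⇑p (r i)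
        ≤ ((τ * (1 + Real.sqrt σ) *
            Real.sqrt (dw0 / ((1 - σ) * ∑ j ∈ Finset.Icc 1 k, lam j ^ 2)) : ℝ) : EReal)
      ∧ ε i ≤ σ * dw0 * lam i / ((1 - σ) * ∑ j ∈ Finset.Icc 1 k, lam j ^ 2) := by
  intro k hk
  have hM : 0 ≤ M := hm.le.trans hmM
  have bn : ∀ z ∈ Z, ∀ z' ∈ Z, m / 2 * (p (z - z'))^2 ≤ breg w gw z z' := hw.strconv
  have bn0 : ∀ z ∈ Z, ∀ z' ∈ Z, 0 ≤ breg w gw z z' := fun z hz z' hz' =>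
    le_trans (by positivity) (bn z hz z' hz')
  have step : ∀ zx, (0 : E) ∈ T zx → ∀ j, 1 ≤ j →
      (1 - σ) * breg w gw (zs (j-1)) (zt j) ≤
        breg w gw (zs (j-1)) zx - breg w gw (zs j) zx := by
    intro zx hzx j hj
    have h1 := hseq.incl j hj zx 0 hzx
    have h2 := hseq.err j hj
    have hl := hseq.lam_pos j hj
    have h3 : -(lam j * ε j) ≤ ⟪gw (zs (j-1)) - gw (zs j), zt j - zx⟫ := by
      rw [sub_zero, real_inner_smul_left] at h1
      have h4 := mul_le_mul_of_nonneg_left h1 hl.le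
      rw [← mul_assoc, mul_one_div_cancel hl.ne', one_mul] at h4
      linarith
    have h5 : breg w gw (zs (j-1)) zx - breg w gw (zs j) zx =
        breg w gw (zs (j-1)) (zt j) - breg w gw (zs j) (zt j)
          + ⟪gw (zs (j-1)) - gw (zs j), zt j - zx⟫ := by
      simp only [breg, inner_sub_left, inner_sub_right]
      ring
    linarith
  have sum_le : ∀ zx, (0 : E) ∈ T zx → ∀ n,
      (1 - σ) * ∑ j ∈ Finset.Icc 1 n, breg w gw (zs (j-1)) (zt j) ≤
        breg w gw (zs 0) zx - breg w gw (zs n) zx := by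
    intro zx hzx n
    induction n with
    | zero => simp
    | succ n ih =>
      rw [Finset.sum_Icc_succ_top (by omega), mul_add]
      have := step zx hzx (n+1) (by omega)
      simp only [Nat.add_sub_cancel] at this ⊢
      linarith
  have hσ' : 0 < 1 - σ := by linarith
  have htot : (1 - σ) * ∑ j ∈ Finset.Icc 1 k, breg w gw (zs (j-1)) (zt j) ≤ dw0 := by
    rw [hdw0]
    apply le_csInf
    · obtain ⟨z, hz⟩ := hsol
      exact ⟨_, z, hz, rfl⟩
    · rintro _ ⟨z, hz, rfl⟩
      have := sum_le z hz k
      have := bn0 (zs k) (hseq.zs_mem k) z (hdom z ⟨0, hz⟩)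
      linarith
  have hS : 0 < ∑ j ∈ Finset.Icc 1 k, lam j ^ 2 := by
    apply Finset.sum_pos
    · intro j hj
      have := hseq.lam_pos j (Finset.mem_Icc.1 hj).1
      positivity
    · exact ⟨1, by simp [hk]⟩
  set S := ∑ j ∈ Finset.Icc 1 k, lam j ^ 2 with hSdef
  set C := dw0 / ((1 - σ) * S) with hC
  obtain ⟨i, hi, hai⟩ : ∃ i ∈ Finset.Icc 1 k,
      breg w gw (zs (i-1)) (zt i) ≤ lam i ^ 2 * C := by
    apply Finset.exists_le_of_sum_le ⟨1, by simp [hk]⟩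
    rw [← Finset.sum_mul, ← hSdef]
    have : S * C = dw0 / (1 - σ) := by rw [hC]; field_simp
    rw [this, le_div_iff₀ hσ']
    linarith
  obtain ⟨hi1, hik⟩ := Finset.mem_Icc.1 hi
  have hl := hseq.lam_pos i hi1
  have he := hseq.err i hi1
  have hz0 := hseq.zs_mem (i-1)
  have hz1 := hseq.zs_mem i
  have hzt := hseq.zt_mem i hi1
  have hε := hseq.eps_nonneg i hi1
  have key : ∀ x b : ℝ, 0 ≤ x → m / 2 * x ^ 2 ≤ b →
      x ≤ Real.sqrt 2 / Real.sqrt m * Real.sqrt b := by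
    intro x b hx hb
    rw [← Real.sqrt_div (by norm_num), ← Real.sqrt_mul (by positivity)]
    apply Real.le_sqrt_of_sq_le
    rw [div_mul_eq_mul_div, le_div_iff₀ hm]
    linarith
  refine ⟨i, hi1, hik, ?_, ?_⟩
  · have hb1 := bn _ hz0 _ hzt
    have hb2 := bn _ hz1 _ hzt
    have hb3 := bn0 _ hz1 _ hzt
    set a := breg w gw (zs (i-1)) (zt i) with ha
    have k1 := key _ _ (apply_nonneg p _) (hb1.trans hai)
    have k2 := key (p (zs i - zt i)) (σ * (lam i ^ 2 * C)) (apply_nonneg p _) (by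
      have := mul_le_mul_of_nonneg_left hai hσ0
      have := mul_nonneg hl.le hε
      linarith)
    rw [Real.sqrt_mul hσ0] at k2
    rw [Real.sqrt_mul (by positivity), Real.sqrt_sq hl.le] at k1 k2
    have k3 : p (zs (i-1) - zs i) ≤ p (zs (i-1) - zt i) + p (zs i - zt i) := by
      have := map_sub_le_add p (zs (i-1) - zt i) (zs i - zt i)
      simpa using this
    apply iSup_le
    intro z
    rw [EReal.coe_le_coe_iff, hr i, real_inner_smul_left]
    have h1 : ((⟪gw (zs (i-1)) - gw (zs i), z.1⟫ : ℝ) : EReal) ≤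
        ((M * p (zs (i-1) - zs i) : ℝ) : EReal) :=
      le_trans (le_iSup (fun z : {z : E // p z ≤ 1} =>
        ((⟪gw (zs (i-1)) - gw (zs i), z.1⟫ : ℝ) : EReal)) z) (hw.lips _ hz0 _ hz1)
    rw [EReal.coe_le_coe_iff] at h1
    rw [one_div, inv_mul_le_iff₀ hl, hτ]
    refine h1.trans ((mul_le_mul_of_nonneg_left (k3.trans (add_le_add k1 k2)) hM).trans
      (le_of_eq ?_))
    ring
  · have h1 : lam i * ε i ≤ σ * (lam i ^ 2 * C) := by
      have := mul_le_mul_of_nonneg_left hai hσ0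
      have := bn0 _ hz1 _ hzt
      linarith
    have h2 : σ * dw0 * lam i / ((1 - σ) * S) = σ * lam i * C := by rw [hC]; ring
    rw [h2]
    refine le_of_mul_le_mul_left (h1.trans (le_of_eq ?_)) hl
    ring
end

section
/- (Ergodic convergence.) Let (λ_k, z_k, z̃_k, ε_k) be NE-HPE sequences for T with parameter σ, distance generating function w ∈ 𝒟_Z(m,M), and initial point z₀ ∈ Z, set r_k := (1/λ_k)(∇w(z_{k−1}) − ∇w(z_k)), τ := √2·M/√m and (dw)_0 := inf{(dw)_{z₀}(z*) : 0 ∈ T(z*)}, and for k ≥ 1 define Λ_k := Σ_{i=1}^{k} λ_i, z̃^a_k := (1/Λ_k) Σ_{i=1}^{k} λ_i z̃_i, r^a_k := (1/Λ_k) Σ_{i=1}^{k} λ_i r_i, ε^a_k := (1/Λ_k) Σ_{i=1}^{k} λ_i(ε_i + ⟨r_i, z̃_i − z̃^a_k⟩), and ρ_k := max_{i=1,…,k} (dw)_{z_i}(z̃_i). Then for every k ≥ 1: ε^a_k ≥ 0, r^a_k ∈ T^[ε^a_k](z̃^a_k), ‖r^a_k‖_* ≤ 2τ√((dw)_0)/Λ_k,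 and ε^a_k ≤ (3M/m)(2(dw)_0 + ρ_k)/Λ_k. Moreover: (a) if σ < 1 then ρ_k ≤ σ(dw)_0/(1−σ); (b) if Dom(T) has finite diameter D := sup{min{(dw)_y(y′), (dw)_{y′}(y)} : y, y′ ∈ Dom(T)} with respect to dw, then ρ_k ≤ (2M/m)[(dw)_0 + D]. -/
open RealInnerProductSpace Filter

theorem minty_fin {E : Type*} [NormedAddCommGroup E] [InnerProductSpace ℝ E]
    {ι : Type*} [Fintype ι] [Nonempty ι] (z t : ι → E)
    (hmono : ∀ i j, 0 ≤ ⟪z i - z j, t i - t j⟫) :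
    ∃ y : E, ∀ i, ⟪t i + y, y - z i⟫ ≤ 0 := by
  classical
  let G : (ι → ℝ) → ℝ := fun μ =>
    -(1/4) * ‖∑ i, μ i • (t i - z i)‖^2 - ∑ i, μ i * ⟪t i, z i⟫
  have hGc : Continuous G := by
    dsimp only [G]
    fun_prop
  obtain ⟨i0⟩ := ‹Nonempty ι›
  obtain ⟨μ, hμ, hmax⟩ := (isCompact_stdSimplex ℝ ι).exists_isMaxOn
    ⟨Pi.single i0 1, single_mem_stdSimplex ℝ i0⟩ hGc.continuousOn
  set D := ∑ i, μ i • (t i - z i) with hD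
  set c := ∑ i, μ i * ⟪t i, z i⟫ with hc
  have hG0 : -(1/4) * ‖D‖^2 - c ≤ 0 := by
    set a := ∑ i, μ i • t i with ha
    set b := ∑ i, μ i • z i with hb
    have hDab : D = a - b := by
      simp [hD, ha, hb, smul_sub, Finset.sum_sub_distrib]
    have h1 : ⟪a, b⟫ ≤ c := by
      have h2 : 0 ≤ ∑ i, ∑ j, μ i * μ j * ⟪z i - z j, t i - t j⟫ :=
        Finset.sum_nonneg fun i _ => Finset.sum_nonneg fun j _ =>
          mul_nonneg (mul_nonneg (hμ.1 i) (hμ.1 j)) (hmono i j)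
      have h3 : ∑ i, ∑ j, μ i * μ j * ⟪z i - z j, t i - t j⟫ = 2 * c - 2 * ⟪a, b⟫ := by
        have e1 : ∑ i, ∑ j, μ i * μ j * ⟪t i, z i⟫ = c := by
          rw [hc]
          refine Finset.sum_congr rfl fun i _ => ?_
          have : ∀ j, μ i * μ j * ⟪t i, z i⟫ = (μ i * ⟪t i, z i⟫) * μ j := fun j => by ring
          simp_rw [this]
          rw [← Finset.mul_sum, hμ.2, mul_one]
        have e2 : ∑ i, ∑ j, μ i * μ j * ⟪t j, z j⟫ = c := by
          rw [Finset.sum_comm, ← e1]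
          refine Finset.sum_congr rfl fun i _ => Finset.sum_congr rfl fun j _ => by ring
        have e3 : ∑ i, ∑ j, μ i * μ j * ⟪t i, z j⟫ = ⟪a, b⟫ := by
          rw [ha, hb, sum_inner]
          refine Finset.sum_congr rfl fun i _ => ?_
          rw [inner_sum]
          refine Finset.sum_congr rfl fun j _ => ?_
          rw [real_inner_smul_left, real_inner_smul_right]; ring
        have e4 : ∑ i, ∑ j, μ i * μ j * ⟪t j, z i⟫ = ⟪a, b⟫ := by
          rw [Finset.sum_comm, ← e3]
          refine Finset.sum_congr rfl fun i _ => Finset.sum_congr rfl fun j _ => by ring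
        have e5 : ∀ i j, μ i * μ j * ⟪z i - z j, t i - t j⟫ =
            μ i * μ j * ⟪t i, z i⟫ + μ i * μ j * ⟪t j, z j⟫ - μ i * μ j * ⟪t i, z j⟫
              - μ i * μ j * ⟪t j, z i⟫ := by
          intro i j
          rw [real_inner_comm]
          simp only [inner_sub_left, inner_sub_right]; ring
        simp_rw [e5, Finset.sum_sub_distrib, Finset.sum_add_distrib]
        rw [e1, e2, e3, e4]; ring
      linarith
    have h4 := norm_sub_sq_real a b
    have h5 := norm_add_sq_real a b
    rw [hDab]
    nlinarith [sq_nonneg ‖a + b‖]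
  refine ⟨-(1/2 : ℝ) • D, fun i => ?_⟩
  set d := t i - z i with hd
  have key : -(1/2) * ⟪D, d - D⟫ - (⟪t i, z i⟫ - c) ≤ 0 := by
    by_contra! hcon
    set K := -(1/2) * ⟪D, d - D⟫ - (⟪t i, z i⟫ - c) with hK
    have hall : ∀ h : ℝ, 0 < h → h ≤ 1 → K ≤ h / 4 * ‖d - D‖^2 := by
      intro h h0 h1
      let ν : ι → ℝ := (1 - h) • μ + h • Pi.single i 1
      have hν : ν ∈ stdSimplex ℝ ι :=
        convex_stdSimplex ℝ ι hμ (single_mem_stdSimplex ℝ i) (by linarith) h0.le (by ring)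
      have hle : G ν ≤ G μ := hmax hν
      have e1 : ∑ j, ν j • (t j - z j) = D + h • (d - D) := by
        have : ∀ j, ν j • (t j - z j) =
            (1 - h) • (μ j • (t j - z j)) + h • ((Pi.single i (1:ℝ) : ι → ℝ) j • (t j - z j)) := by
          intro j
          simp only [ν, Pi.add_apply, Pi.smul_apply, smul_eq_mul, add_smul, mul_smul]
        simp_rw [this, Finset.sum_add_distrib, ← Finset.smul_sum]
        rw [← hD]
        have : ∑ j, (Pi.single i (1:ℝ) : ι → ℝ) j • (t j - z j) = d := by
          simp [Pi.single_apply, hd]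
        rw [this]; module
      have e2 : ∑ j, ν j * ⟪t j, z j⟫ = c + h * (⟪t i, z i⟫ - c) := by
        have : ∀ j, ν j * ⟪t j, z j⟫ =
            (1 - h) * (μ j * ⟪t j, z j⟫) + h * ((Pi.single i (1:ℝ) : ι → ℝ) j * ⟪t j, z j⟫) := by
          intro j
          simp only [ν, Pi.add_apply, Pi.smul_apply, smul_eq_mul]; ring
        simp_rw [this, Finset.sum_add_distrib, ← Finset.mul_sum]
        rw [← hc]
        have : ∑ j, (Pi.single i (1:ℝ) : ι → ℝ) j * ⟪t j, z j⟫ = ⟪t i, z i⟫ := by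
          simp [Pi.single_apply]
        rw [this]; ring
      have e3 : G ν = -(1/4) * ‖D + h • (d - D)‖^2 - (c + h * (⟪t i, z i⟫ - c)) := by
        simp only [G]; rw [e1, e2]
      have e4 : G μ = -(1/4) * ‖D‖^2 - c := rfl
      rw [e3, e4, norm_add_sq_real, real_inner_smul_right, norm_smul, mul_pow,
        Real.norm_eq_abs, sq_abs] at hle
      have : h * K ≤ h * (h / 4 * ‖d - D‖^2) := by
        rw [hK]; nlinarith
      exact le_of_mul_le_mul_left this h0
    set N := ‖d - D‖^2 with hN
    have hN0 : 0 ≤ N := sq_nonneg _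
    have hs := hall (min 1 (K / (N + 1))) (lt_min one_pos (by positivity)) (min_le_left _ _)
    have h2 : min 1 (K / (N + 1)) * (N + 1) ≤ K := by
      have := mul_le_mul_of_nonneg_right (min_le_right 1 (K / (N + 1))) (by linarith : 0 ≤ N + 1)
      rwa [div_mul_cancel₀ _ (by linarith : N + 1 ≠ 0)] at this
    have h3 : 0 < min 1 (K / (N + 1)) := lt_min one_pos (by positivity)
    nlinarith
  have e : ⟪t i + -(1/2 : ℝ) • D, -(1/2 : ℝ) • D - z i⟫ =
      1/4 * ‖D‖^2 - 1/2 * ⟪D, d⟫ - ⟪t i, z i⟫ := by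
    rw [hd, ← real_inner_self_eq_norm_sq]
    simp only [inner_add_left, inner_sub_right, real_inner_smul_left, real_inner_smul_right]
    rw [real_inner_comm D (t i)]
    ring
  rw [e]
  rw [inner_sub_right, real_inner_self_eq_norm_sq] at key
  linarith

theorem minty_set {E : Type*} [NormedAddCommGroup E] [InnerProductSpace ℝ E]
    [FiniteDimensional ℝ E] (G : Set (E × E)) (hG : G.Nonempty)
    (hmono : ∀ a ∈ G, ∀ b ∈ G, 0 ≤ ⟪a.1 - b.1, a.2 - b.2⟫) :
    ∃ y : E, ∀ a ∈ G, ⟪a.2 + y, y - a.1⟫ ≤ 0 := by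
  classical
  obtain ⟨a0, ha0⟩ := hG
  have hcl : ∀ a : E × E, IsClosed {y : E | ⟪a.2 + y, y - a.1⟫ ≤ 0} := fun a =>
    isClosed_le (by fun_prop) continuous_const
  have hK : IsCompact {y : E | ⟪a0.2 + y, y - a0.1⟫ ≤ 0} := by
    refine Metric.isCompact_of_isClosed_isBounded (hcl a0) ?_
    refine (Metric.isBounded_closedBall (x := (0:E))
      (r := 1 + ‖a0.2‖ + ‖a0.1‖ + ‖a0.2‖ * ‖a0.1‖)).subset fun y hy => ?_
    rw [mem_closedBall_zero_iff]
    simp only [Set.mem_ofPred_eq, inner_add_left, inner_sub_right] at hy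
    rw [real_inner_self_eq_norm_sq] at hy
    have h1 := abs_le.1 (abs_real_inner_le_norm a0.2 y)
    have h2 := abs_le.1 (abs_real_inner_le_norm a0.2 a0.1)
    have h3 := abs_le.1 (abs_real_inner_le_norm y a0.1)
    by_contra! hcon
    nlinarith [norm_nonneg a0.1, norm_nonneg a0.2, norm_nonneg y,
      mul_nonneg (norm_nonneg a0.1) (norm_nonneg a0.2)]
  have := hK.inter_iInter_nonempty (fun a : G => {y : E | ⟪a.1.2 + y, y - a.1.1⟫ ≤ 0})
    (fun a => hcl a.1) (by
      intro u
      let s : Finset G := insert ⟨a0, ha0⟩ u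
      have : Nonempty s := ⟨⟨⟨a0, ha0⟩, Finset.mem_insert_self _ _⟩⟩
      obtain ⟨y, hy⟩ := minty_fin (fun i : s => i.1.1.1) (fun i : s => i.1.1.2)
        (fun i j => hmono _ i.1.2 _ j.1.2)
      refine ⟨y, hy ⟨⟨a0, ha0⟩, Finset.mem_insert_self _ _⟩, ?_⟩
      simp only [Set.mem_iInter]
      intro i hi
      exact hy ⟨i, Finset.mem_insert_of_mem hi⟩)
  obtain ⟨y, -, hy⟩ := this
  refine ⟨y, fun a ha => ?_⟩
  simp only [Set.mem_iInter] at hy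
  exact hy ⟨a, ha⟩

/-- Points monotonically related to the graph belong to it. -/
theorem maxmono_mem {E : Type*} [NormedAddCommGroup E] [InnerProductSpace ℝ E]
    {T : E → Set E} (hT : MaxMonoOp T) {y s : E}
    (h : ∀ z t, t ∈ T z → 0 ≤ ⟪y - z, s - t⟫) : s ∈ T y := by
  have := hT.2 (fun z => T z ∪ {t | z = y ∧ t = s}) ?_ (fun z => Set.subset_union_left)
  · have h2 := congrFun this y
    rw [← h2]
    exact Or.inr ⟨rfl, rfl⟩
  · rintro z z' t t' (h1 | ⟨rfl, rfl⟩) (h2 | ⟨rfl, rfl⟩)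
    · exact hT.1 _ _ _ _ h1 h2
    · have := h _ _ h1
      rwa [← neg_sub z, ← neg_sub t, inner_neg_neg] at this
    · exact h _ _ h2
    · simp

theorem minty_res {E : Type*} [NormedAddCommGroup E] [InnerProductSpace ℝ E]
    [FiniteDimensional ℝ E] {T : E → Set E} (hT : MaxMonoOp T) (hne : ∃ z, (T z).Nonempty)
    (l : ℝ) (hl : 0 < l) (x : E) : ∃ y s, s ∈ T y ∧ l • s = x - y := by
  obtain ⟨z0, t0, h0⟩ := hne
  obtain ⟨y, hy⟩ := minty_set {a : E × E | ∃ t ∈ T a.1, a.2 = l • t - x}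
    ⟨(z0, l • t0 - x), t0, h0, rfl⟩ (by
      rintro ⟨z, _⟩ ⟨t, ht, rfl⟩ ⟨z', _⟩ ⟨t', ht', rfl⟩
      have := hT.1 _ _ _ _ ht ht'
      have e : l • t - x - (l • t' - x) = l • (t - t') := by module
      simp only [e, real_inner_smul_right]
      positivity)
  refine ⟨y, l⁻¹ • (x - y), maxmono_mem hT ?_, by rw [smul_inv_smul₀ hl.ne']⟩
  intro z t ht
  have h := hy (z, l • t - x) ⟨t, ht, rfl⟩
  simp only at h
  have e : l⁻¹ • (x - y) - t = (-l⁻¹) • (l • t - x + y) := by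
    match_scalars <;> field_simp
  rw [e, real_inner_smul_right, real_inner_comm]
  have : 0 < l⁻¹ := inv_pos.2 hl
  nlinarith

/-- The segment from a zero of `T` to a point of the domain of an enlargement is in the closure
of the domain of `T`. -/
theorem dense_seg {E : Type*} [NormedAddCommGroup E] [InnerProductSpace ℝ E]
    [FiniteDimensional ℝ E] {T : E → Set E} (hT : MaxMonoOp T) {zst u r : E} {e : ℝ}
    (hz : (0 : E) ∈ T zst) (he : 0 ≤ e) (hr : r ∈ epsEnl T e u) (s : ℝ) (hs0 : 0 ≤ s)
    (hs1 : s ≤ 1) (δ : ℝ) (hδ : 0 < δ) :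
    ∃ q, (T q).Nonempty ∧ ‖q - (zst + s • (u - zst))‖ ≤ δ := by
  set x := zst + s • (u - zst) with hx
  set C := e + ‖r‖ * ‖x - u‖ with hC
  have hC0 : 0 ≤ C := by positivity
  set l := δ^2 / (C + δ * ‖r‖ + 1) with hl
  have hden : 0 < C + δ * ‖r‖ + 1 := by positivity
  have hl0 : 0 < l := by positivity
  obtain ⟨y, t, ht, hty⟩ := minty_res hT ⟨zst, 0, hz⟩ l hl0 x
  refine ⟨y, ⟨t, ht⟩, ?_⟩
  have h1 := hT.1 _ _ _ _ ht hz
  have h2 := hr y t ht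
  rw [sub_zero] at h1
  have hid : ⟪l • t, y - x⟫ = l * ((1 - s) * ⟪y - zst, t⟫ + s * ⟪r - t, u - y⟫
      + s * ⟪r, y - u⟫) := by
    have : y - x = (1 - s) • (y - zst) + s • (y - u) := by rw [hx]; module
    rw [this, real_inner_smul_left, inner_add_right, real_inner_smul_right,
      real_inner_smul_right, real_inner_comm t (y - zst)]
    have h3 : ⟪r - t, u - y⟫ = ⟪t, y - u⟫ - ⟪r, y - u⟫ := by
      rw [← neg_sub y u, inner_neg_right, inner_sub_left]; ring
    rw [h3]; ring
  have hlhs : ⟪l • t, y - x⟫ = - ‖y - x‖^2 := by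
    rw [hty, ← neg_sub y x, inner_neg_left, real_inner_self_eq_norm_sq]
  have h4 : -(‖r‖ * (‖y - x‖ + ‖x - u‖)) ≤ ⟪r, y - u⟫ := by
    have h5 := (abs_le.1 (abs_real_inner_le_norm r (y - u))).1
    have h6 : ‖y - u‖ ≤ ‖y - x‖ + ‖x - u‖ := norm_sub_le_norm_sub_add_norm_sub _ _ _
    nlinarith [norm_nonneg r]
  set n := ‖y - x‖ with hn
  have hn0 : 0 ≤ n := norm_nonneg _
  have h7 : n^2 ≤ l * (C + ‖r‖ * n) := by
    have a1 : 0 ≤ (1 - s) * ⟪y - zst, t⟫ := mul_nonneg (by linarith) h1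
    have a2 : s * (-e) ≤ s * ⟪r - t, u - y⟫ := mul_le_mul_of_nonneg_left h2 hs0
    have a3 : s * (-(‖r‖ * (n + ‖x - u‖))) ≤ s * ⟪r, y - u⟫ := mul_le_mul_of_nonneg_left h4 hs0
    have a4 : s * (C + ‖r‖ * n) ≤ C + ‖r‖ * n := by
      have : 0 ≤ C + ‖r‖ * n := by positivity
      nlinarith
    have a5 : -(C + ‖r‖ * n) ≤ (1 - s) * ⟪y - zst, t⟫ + s * ⟪r - t, u - y⟫
      + s * ⟪r, y - u⟫ := by rw [hC] at a4 ⊢; nlinarith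
    have := mul_le_mul_of_nonneg_left a5 hl0.le
    rw [← hid, hlhs] at this
    linarith
  by_contra! hcon
  have h8 : l * (C + δ * ‖r‖ + 1) = δ^2 := by rw [hl]; field_simp
  -- multiply by `δ / n`
  have h9 : l * (C + ‖r‖ * n) * δ ≤ l * (C + δ * ‖r‖ + 1) * n := by
    have : (C + ‖r‖ * n) * δ ≤ (C + δ * ‖r‖ + 1) * n := by nlinarith [norm_nonneg r]
    nlinarith
  rw [h8] at h9
  have h10 : n^2 * δ ≤ δ^2 * n := le_trans (mul_le_mul_of_nonneg_right h7 hδ.le) h9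
  have h11 : 0 < n * δ * (n - δ) := by
    have : 0 < n := by linarith
    have : 0 < n - δ := by linarith
    positivity
  nlinarith

theorem sn_bound {E : Type*} [NormedAddCommGroup E] [InnerProductSpace ℝ E]
    [FiniteDimensional ℝ E] (p : Seminorm ℝ E) : ∃ C, 0 < C ∧ ∀ x : E, p x ≤ C * ‖x‖ := by
  refine p.bound_of_continuous_normedSpace ?_
  rw [← continuousOn_univ]
  exact p.convexOn.continuousOn isOpen_univ

theorem dual_le {E : Type*} [NormedAddCommGroup E] [InnerProductSpace ℝ E]
    (p : Seminorm ℝ E) {v : E} {c : ℝ} (h : dualSN ⇑p v ≤ (c : EReal)) (u : E) :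
    ⟪v, u⟫ ≤ c * p u := by
  have h1 : ∀ z, p z ≤ 1 → ⟪v, z⟫ ≤ c := by
    intro z hz
    have := (le_iSup (fun z : {z : E // p z ≤ 1} => ((⟪v, z.1⟫ : ℝ) : EReal)) ⟨z, hz⟩).trans h
    exact EReal.coe_le_coe_iff.1 this
  rcases (apply_nonneg p u).eq_or_lt with h0 | h0
  · rw [← h0, mul_zero]
    by_contra! hc
    have h2 := h1 (((|c| + 1) / ⟪v, u⟫) • u) (by rw [map_smul_eq_mul, ← h0]; simp)
    rw [real_inner_smul_right, div_mul_cancel₀ _ hc.ne'] at h2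
    linarith [le_abs_self c]
  · have h2 := h1 ((p u)⁻¹ • u) (by
      rw [map_smul_eq_mul, Real.norm_of_nonneg (by positivity), inv_mul_cancel₀ h0.ne'])
    rw [real_inner_smul_right, inv_mul_le_iff₀ h0] at h2
    linarith

theorem three_pt {E : Type*} [NormedAddCommGroup E] [InnerProductSpace ℝ E]
    (w : E → ℝ) (gw : E → E) (a b c : E) :
    breg w gw a c = breg w gw b c + breg w gw a b + ⟪gw b - gw a, c - b⟫ := by
  unfold breg
  have : c - a = (c - b) + (b - a) := by abel
  rw [this, inner_add_right, inner_sub_left]; ring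

/-- Quadratic upper bound for the Bregman distance along an approximable segment. -/
theorem breg_upper {E : Type*} [NormedAddCommGroup E] [InnerProductSpace ℝ E]
    [FiniteDimensional ℝ E] {Z : Set E} {p : Seminorm ℝ E} {m M : ℝ} (hm : 0 < m) (hmM : m ≤ M)
    {w : E → ℝ} {gw : E → E} (hw : IsDGF Z p m M w gw) {x u : E} (hx : x ∈ Z) (hu : u ∈ Z)
    (happ : ∀ s : ℝ, 0 ≤ s → s ≤ 1 → ∀ δ : ℝ, 0 < δ → ∃ q ∈ Z, p (q - (x + s • (u - x))) ≤ δ) :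
    breg w gw x u ≤ M / 2 * (p (u - x))^2 := by
  set d := p (u - x) with hd
  have hd0 : 0 ≤ d := apply_nonneg _ _
  have hM : 0 < M := by linarith
  have main : ∀ n : ℕ, breg w gw x u ≤
      M / 2 * d^2 + M * (d^2 / 2 + 3 * d + 2) * (1 / ((n : ℝ) + 1)) := by
    intro n
    set N : ℝ := (n : ℝ) + 1 with hN
    have hN1 : 1 ≤ N := by rw [hN]; linarith [(Nat.cast_nonneg n : (0:ℝ) ≤ n)]
    have hN0 : 0 < N := by linarith
    set δ := 1 / N^2 with hδ
    have hδ0 : 0 < δ := by positivity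
    have hδ1 : δ ≤ 1 := by
      rw [hδ, div_le_one (by positivity)]; nlinarith
    have hex : ∀ j : ℕ, ∃ q, (j ≤ n + 1 → q ∈ Z ∧ p (q - (x + ((j : ℝ) / N) • (u - x))) ≤ δ) ∧
        (j = 0 → q = x) ∧ (j = n + 1 → q = u) := by
      intro j
      rcases Nat.eq_zero_or_pos j with rfl | hj
      · exact ⟨x, fun _ => ⟨hx, by simpa using hδ0.le⟩, fun _ => rfl, fun h => by omega⟩
      · by_cases hj2 : j = n + 1
        · refine ⟨u, fun _ => ⟨hu, ?_⟩, fun h => by omega, fun _ => rfl⟩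
          have : (j : ℝ) / N = 1 := by
            rw [hj2, hN]; push_cast; exact div_self (by positivity)
          rw [this, one_smul]
          simpa using hδ0.le
        · by_cases hj3 : j ≤ n + 1
          · obtain ⟨q, hq, hq2⟩ := happ ((j : ℝ) / N) (by positivity) (by
              rw [div_le_one hN0, hN]; exact_mod_cast hj3) δ hδ0
            exact ⟨q, fun _ => ⟨hq, hq2⟩, fun h => by omega, fun h => by omega⟩
          · exact ⟨x, fun h => by omega, fun h => by omega, fun h => by omega⟩
    choose q hq hq0 hqN using hex
    have ind : ∀ j : ℕ, j ≤ n + 1 → breg w gw x (q j) ≤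
        M * (d^2 * ((j : ℝ) * (j + 1)) / 2 * δ + j * ((3 * d + 2) * δ)) := by
      intro j
      induction j with
      | zero => intro _; rw [hq0 0 rfl]; simp [breg]
      | succ j ih =>
        intro hj
        have ih := ih (by omega)
        obtain ⟨hz1, hc1⟩ := hq j (by omega)
        obtain ⟨hz2, hc2⟩ := hq (j + 1) hj
        have hs := hw.strconv _ hz2 _ hz1
        have hs0 : 0 ≤ m / 2 * (p (q (j+1) - q j))^2 := by positivity
        have hl := dual_le p (hw.lips _ hz2 _ hx) (q (j + 1) - q j)
        have e1 : breg w gw x (q (j+1)) ≤ breg w gw x (q j) +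
            ⟪gw (q (j+1)) - gw x, q (j+1) - q j⟫ := by
          have h3 : q j - q (j+1) = -(q (j+1) - q j) := by abel
          rw [h3, inner_neg_right] at hs
          unfold breg
          have h4 : q (j+1) - x = (q (j+1) - q j) + (q j - x) := by abel
          rw [h4, inner_add_right, inner_sub_left]
          linarith
        have b1 : p (q (j+1) - x) ≤ ((j:ℝ) + 1) / N * d + δ := by
          have h5 : q (j+1) - x = (q (j+1) - (x + (((j+1 : ℕ) : ℝ) / N) • (u - x)))
              + (((j+1 : ℕ) : ℝ) / N) • (u - x) := by abel
          rw [h5]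
          refine (map_add_le_add p _ _).trans ?_
          rw [map_smul_eq_mul, Real.norm_of_nonneg (by positivity)]
          push_cast at hc2 ⊢
          linarith
        have b2 : p (q (j+1) - q j) ≤ d / N + 2 * δ := by
          have h5 : q (j+1) - q j = (q (j+1) - (x + (((j+1 : ℕ) : ℝ) / N) • (u - x)))
              - (q j - (x + ((j : ℝ) / N) • (u - x))) + (1 / N) • (u - x) := by
            push_cast; rw [add_div, add_smul]; abel
          rw [h5]
          refine (map_add_le_add p _ _).trans ?_
          rw [map_smul_eq_mul, Real.norm_of_nonneg (by positivity)]
          have h6 := map_sub_le_add p (q (j+1) - (x + (((j+1 : ℕ) : ℝ) / N) • (u - x)))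
            (q j - (x + ((j : ℝ) / N) • (u - x)))
          have h7 : 1 / N * p (u - x) = d / N := by rw [← hd]; ring
          linarith
        have b3 : p (q (j+1) - x) * p (q (j+1) - q j) ≤
            (((j:ℝ) + 1) / N * d + δ) * (d / N + 2 * δ) :=
          mul_le_mul b1 b2 (apply_nonneg _ _) (by positivity)
        have hjN : ((j:ℝ) + 1) / N ≤ 1 := by
          rw [div_le_one hN0, hN]
          exact_mod_cast hj
        have hN' : 1 / N ≤ 1 := by rw [div_le_one hN0]; exact hN1
        have b4 : (((j:ℝ) + 1) / N * d + δ) * (d / N + 2 * δ) ≤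
            ((j:ℝ) + 1) * d^2 * δ + (3 * d + 2) * δ := by
          have e : (((j:ℝ) + 1) / N * d + δ) * (d / N + 2 * δ) =
            ((j:ℝ) + 1) * d^2 * δ + 2 * (((j:ℝ) + 1) / N) * (d * δ) + (1 / N) * (d * δ)
              + 2 * (δ * δ) := by
            rw [hδ]; field_simp; ring
          have hdδ : 0 ≤ d * δ := by positivity
          rw [e]
          nlinarith [mul_le_mul_of_nonneg_right hjN hdδ, mul_le_mul_of_nonneg_right hN' hdδ,
            mul_le_mul_of_nonneg_right hδ1 hδ0.le]
        have b5 : M * (p (q (j+1) - x) * p (q (j+1) - q j)) ≤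
            M * (((j:ℝ) + 1) * d^2 * δ + (3 * d + 2) * δ) :=
          mul_le_mul_of_nonneg_left (b3.trans b4) hM.le
        push_cast
        nlinarith
    have hfin := ind (n + 1) le_rfl
    rw [hqN (n + 1) rfl] at hfin
    have e2 : M * (d^2 * (((n + 1 : ℕ) : ℝ) * ((n + 1 : ℕ) + 1)) / 2 * δ
        + ((n + 1 : ℕ) : ℝ) * ((3 * d + 2) * δ))
        = M / 2 * d^2 + M * (d^2 / 2 + 3 * d + 2) * (1 / N) := by
      push_cast
      rw [← hN, hδ]; field_simp; ring
    rw [e2] at hfin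
    exact hfin
  have hlim : Tendsto (fun n : ℕ => M / 2 * d^2 + M * (d^2 / 2 + 3 * d + 2) * (1 / ((n : ℝ) + 1)))
      atTop (nhds (M / 2 * d^2 + M * (d^2 / 2 + 3 * d + 2) * 0)) :=
    tendsto_const_nhds.add (tendsto_one_div_add_atTop_nhds_zero_nat.const_mul _)
  rw [mul_zero, add_zero] at hlim
  exact ge_of_tendsto' hlim main

set_option maxHeartbeats 2000000 in
/-- Ergodic convergence of the NE-HPE framework. -/
theorem stmt8
    {E : Type*} [NormedAddCommGroup E] [InnerProductSpace ℝ E] [FiniteDimensional ℝ E]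
    (Z : Set E) (p : Seminorm ℝ E) (m M : ℝ) (hm : 0 < m) (hmM : m ≤ M)
    (w : E → ℝ) (gw : E → E) (hw : IsDGF Z p m M w gw)
    (T : E → Set E) (hT : MaxMonoOp T)
    (hdom : ∀ z, (T z).Nonempty → z ∈ Z) (hsol : ∃ z, 0 ∈ T z)
    (σ : ℝ) (hσ0 : 0 ≤ σ) (hσ1 : σ ≤ 1)
    (lam : ℕ → ℝ) (zs zt : ℕ → E) (ε : ℕ → ℝ)
    (hseq : NEHPE Z w gw T σ lam zs zt ε)
    (r : ℕ → E) (hr : ∀ k, r k = (1 / lam k) • (gw (zs (k - 1)) - gw (zs k)))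
    (τ : ℝ) (hτ : τ = Real.sqrt 2 * M / Real.sqrt m)
    (dw0 : ℝ) (hdw0 : dw0 = sInf (breg w gw (zs 0) '' {z | (0 : E) ∈ T z}))
    (Lam : ℕ → ℝ) (hLam : ∀ k, Lam k = ∑ i ∈ Finset.Icc 1 k, lam i)
    (za ra : ℕ → E)
    (hza : ∀ k, za k = (Lam k)⁻¹ • ∑ i ∈ Finset.Icc 1 k, lam i • zt i)
    (hra : ∀ k, ra k = (Lam k)⁻¹ • ∑ i ∈ Finset.Icc 1 k, lam i • r i)
    (εa : ℕ → ℝ)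
    (hεa : ∀ k, εa k
      = (Lam k)⁻¹ * ∑ i ∈ Finset.Icc 1 k, lam i * (ε i + ⟪r i, zt i - za k⟫))
    (Dset : Set ℝ)
    (hDset : Dset = {x : ℝ | ∃ y, (T y).Nonempty ∧ ∃ y', (T y').Nonempty ∧
        x = min (breg w gw y y') (breg w gw y' y)}) :
    ∀ (k : ℕ) (hk : 1 ≤ k) (ρ : ℝ),
      ρ = (Finset.Icc 1 k).sup' (Finset.nonempty_Icc.mpr hk)
            (fun i => breg w gw (zs i) (zt i)) →
      0 ≤ εa k
      ∧ ra k ∈ epsEnl T (εa k) (za k)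
      ∧ dualSN ⇑p (ra k) ≤ ((2 * τ * Real.sqrt dw0 / Lam k : ℝ) : EReal)
      ∧ εa k ≤ 3 * M / m * ((2 * dw0 + ρ) / Lam k)
      ∧ (σ < 1 → ρ ≤ σ * dw0 / (1 - σ))
      ∧ (BddAbove Dset → ρ ≤ 2 * M / m * (dw0 + sSup Dset)) := by
  intro k hk ρ hρ
  have hM : 0 < M := by linarith
  have hκ : 1 ≤ M / m := by rw [le_div_iff₀ hm]; linarith
  have hstr : ∀ z ∈ Z, ∀ z' ∈ Z, m / 2 * (p (z - z'))^2 ≤ breg w gw z z' := hw.strconv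
  have hnn : ∀ z ∈ Z, ∀ z' ∈ Z, 0 ≤ breg w gw z z' := fun z hz z' hz' =>
    le_trans (by positivity) (hstr z hz z' hz')
  have hzs := hseq.zs_mem
  have hzt := hseq.zt_mem
  have hlr : ∀ i, 1 ≤ i → lam i • r i = gw (zs (i - 1)) - gw (zs i) := by
    intro i hi
    rw [hr, smul_smul, mul_one_div, div_self (hseq.lam_pos i hi).ne', one_smul]
  have step : ∀ i, 1 ≤ i → ∀ u, lam i * (ε i + ⟪r i, zt i - u⟫) ≤
      breg w gw (zs (i - 1)) u - breg w gw (zs i) u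
        - (1 - σ) * breg w gw (zs (i - 1)) (zt i) := by
    intro i hi u
    have h1 : lam i * ⟪r i, zt i - u⟫ = ⟪gw (zs (i - 1)) - gw (zs i), zt i - u⟫ := by
      rw [← hlr i hi, real_inner_smul_left]
    have h2 : ⟪gw (zs (i - 1)) - gw (zs i), zt i - u⟫ =
        breg w gw (zs (i - 1)) u - breg w gw (zs i) u - breg w gw (zs (i - 1)) (zt i)
          + breg w gw (zs i) (zt i) := by
      unfold breg
      simp only [inner_sub_left, inner_sub_right]; ring
    have h3 := hseq.err i hi
    rw [mul_add, h1, h2]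
    linarith
  have hsig : ∀ i, 1 ≤ i → 0 ≤ (1 - σ) * breg w gw (zs (i - 1)) (zt i) := fun i hi =>
    mul_nonneg (by linarith) (hnn _ (hzs _) _ (hzt i hi))
  have sumstep : ∀ n : ℕ, ∀ u, ∑ i ∈ Finset.Icc 1 n, lam i * (ε i + ⟪r i, zt i - u⟫) ≤
      breg w gw (zs 0) u - breg w gw (zs n) u := by
    intro n u
    induction n with
    | zero => simp
    | succ n ih =>
      rw [Finset.sum_Icc_succ_top (by omega)]
      have h1 := step (n + 1) (by omega) u
      have h2 := hsig (n + 1) (by omega)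
      rw [Nat.add_sub_cancel] at h1 h2
      linarith
  have hincl : ∀ i, 1 ≤ i → r i ∈ epsEnl T (ε i) (zt i) := by
    intro i hi; rw [hr]; exact hseq.incl i hi
  have hsZ : ∀ z, (0 : E) ∈ T z → z ∈ Z := fun z hz => hdom z ⟨0, hz⟩
  have desc : ∀ z, (0 : E) ∈ T z → ∀ i, 1 ≤ i → breg w gw (zs i) z ≤
      breg w gw (zs (i - 1)) z - (1 - σ) * breg w gw (zs (i - 1)) (zt i) := by
    intro z hz i hi
    have h1 := hincl i hi z 0 hz
    rw [sub_zero] at h1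
    have h2 := step i hi z
    have h3 : 0 ≤ lam i * (ε i + ⟪r i, zt i - z⟫) :=
      mul_nonneg (hseq.lam_pos i hi).le (by linarith)
    linarith
  have desc0 : ∀ z, (0 : E) ∈ T z → ∀ i, breg w gw (zs i) z ≤ breg w gw (zs 0) z := by
    intro z hz i
    induction i with
    | zero => exact le_rfl
    | succ n ih =>
      have h1 := desc z hz (n + 1) (by omega)
      have h2 := hsig (n + 1) (by omega)
      rw [Nat.add_sub_cancel] at h1 h2
      linarith
  have hinf : ∀ c, (∀ z, (0 : E) ∈ T z → c ≤ breg w gw (zs 0) z) → c ≤ dw0 := by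
    intro c hc
    rw [hdw0]
    obtain ⟨z, hz⟩ := hsol
    refine le_csInf ⟨_, z, hz, rfl⟩ ?_
    rintro _ ⟨z, hz, rfl⟩
    exact hc z hz
  have hdw00 : 0 ≤ dw0 := hinf 0 fun z hz => hnn _ (hzs 0) _ (hsZ z hz)
  have hL0 : 0 < Lam k := by
    rw [hLam]
    exact Finset.sum_pos (fun i hi => hseq.lam_pos i (Finset.mem_Icc.1 hi).1)
      (Finset.nonempty_Icc.mpr hk)
  set S := ∑ i ∈ Finset.Icc 1 k, lam i • r i with hS
  have hSra : S = Lam k • ra k := by rw [hra, smul_inv_smul₀ hL0.ne']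
  have hza' : ∑ i ∈ Finset.Icc 1 k, lam i • zt i = Lam k • za k := by
    rw [hza, smul_inv_smul₀ hL0.ne']
  have hSg : S = gw (zs 0) - gw (zs k) := by
    have : ∀ n : ℕ, ∑ i ∈ Finset.Icc 1 n, lam i • r i = gw (zs 0) - gw (zs n) := by
      intro n
      induction n with
      | zero => simp
      | succ n ih =>
        rw [Finset.sum_Icc_succ_top (by omega), ih, hlr _ (by omega), Nat.add_sub_cancel]
        abel
    exact this k
  set c0 := ∑ i ∈ Finset.Icc 1 k, lam i * (ε i + ⟪r i, zt i⟫) with hc0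
  have hF : ∀ u, ∑ i ∈ Finset.Icc 1 k, lam i * (ε i + ⟪r i, zt i - u⟫) = c0 - ⟪S, u⟫ := by
    intro u
    rw [hc0, hS, sum_inner, ← Finset.sum_sub_distrib]
    refine Finset.sum_congr rfl fun i _ => ?_
    rw [inner_sub_right, real_inner_smul_left]; ring
  have hεa' : Lam k * εa k = c0 - Lam k * ⟪ra k, za k⟫ := by
    rw [hεa, hF, hSra, real_inner_smul_left, mul_inv_cancel_left₀ hL0.ne']
  have henl : ra k ∈ epsEnl T (εa k) (za k) := by
    intro z' t' ht'
    have h1 : ∀ i ∈ Finset.Icc 1 k, 0 ≤ lam i * (ε i + ⟪r i - t', zt i - z'⟫) := by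
      intro i hi
      have hi := (Finset.mem_Icc.1 hi).1
      have := hincl i hi z' t' ht'
      exact mul_nonneg (hseq.lam_pos i hi).le (by linarith)
    have h2 := Finset.sum_nonneg h1
    have h3 : ∑ i ∈ Finset.Icc 1 k, lam i * (ε i + ⟪r i - t', zt i - z'⟫) =
        c0 - ⟪S, z'⟫ - ⟪∑ i ∈ Finset.Icc 1 k, lam i • zt i, t'⟫
          + (∑ i ∈ Finset.Icc 1 k, lam i) * ⟪t', z'⟫ := by
      rw [hc0, hS, sum_inner, sum_inner, Finset.sum_mul, ← Finset.sum_sub_distrib,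
        ← Finset.sum_sub_distrib, ← Finset.sum_add_distrib]
      refine Finset.sum_congr rfl fun i _ => ?_
      rw [inner_sub_right, inner_sub_left, inner_sub_left, real_inner_smul_left,
        real_inner_smul_left, real_inner_comm t' (zt i)]; ring
    rw [h3, hza', hSra, ← hLam, real_inner_smul_left, real_inner_smul_left] at h2
    have h4 : Lam k * ⟪ra k - t', za k - z'⟫ = Lam k * ⟪ra k, za k⟫ - Lam k * ⟪ra k, z'⟫
        - Lam k * ⟪za k, t'⟫ + Lam k * ⟪t', z'⟫ := by
      rw [inner_sub_right, inner_sub_left, inner_sub_left, real_inner_comm (za k) t']; ring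
    have h5 : Lam k * (-εa k) ≤ Lam k * ⟪ra k - t', za k - z'⟫ := by
      rw [h4]; linarith
    exact le_of_mul_le_mul_left h5 hL0
  have hρi : ∀ i, 1 ≤ i → i ≤ k → breg w gw (zs i) (zt i) ≤ ρ := by
    intro i h1 h2
    rw [hρ]
    exact Finset.le_sup' (fun i => breg w gw (zs i) (zt i)) (Finset.mem_Icc.2 ⟨h1, h2⟩)
  refine ⟨?_, henl, ?_, ?_, ?_, ?_⟩
  · -- nonnegativity
    by_contra! hneg
    have h1 : ra k ∈ T (za k) := by
      refine maxmono_mem hT fun z t ht => ?_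
      have := henl z t ht
      rw [real_inner_comm]
      linarith
    have := henl _ _ h1
    simp at this
    linarith
  · -- dual norm bound
    have hP : M * p (zs 0 - zs k) ≤ 2 * τ * Real.sqrt dw0 := by
      set P := p (zs 0 - zs k) with hPd
      have hP0 : 0 ≤ P := apply_nonneg _ _
      have h1 : m * P^2 / 8 ≤ dw0 := by
        refine hinf _ fun z hz => ?_
        have h2 := hstr _ (hzs 0) _ (hsZ z hz)
        have h3 := (hstr _ (hzs k) _ (hsZ z hz)).trans (desc0 z hz k)
        have h4 : P ≤ p (zs 0 - z) + p (zs k - z) := by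
          have : zs 0 - zs k = (zs 0 - z) - (zs k - z) := by abel
          rw [hPd, this]; exact map_sub_le_add p _ _
        have h5 : P^2 ≤ 2 * (p (zs 0 - z))^2 + 2 * (p (zs k - z))^2 := by
          have := pow_le_pow_left₀ hP0 h4 2
          nlinarith [sq_nonneg (p (zs 0 - z) - p (zs k - z))]
        nlinarith
      have hsm : 0 < Real.sqrt m := Real.sqrt_pos.2 hm
      have h6 : P * Real.sqrt m ≤ 2 * (Real.sqrt 2 * Real.sqrt dw0) := by
        refine (sq_le_sq₀ (by positivity) (by positivity)).1 ?_
        rw [mul_pow, mul_pow, mul_pow, Real.sq_sqrt hm.le, Real.sq_sqrt hdw00,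
          Real.sq_sqrt (by norm_num)]
        linarith
      have h7 : P ≤ 2 * (Real.sqrt 2 * Real.sqrt dw0) / Real.sqrt m := by
        rwa [le_div_iff₀ hsm]
      rw [hτ]
      calc M * P ≤ M * (2 * (Real.sqrt 2 * Real.sqrt dw0) / Real.sqrt m) :=
            mul_le_mul_of_nonneg_left h7 hM.le
        _ = _ := by ring
    refine iSup_le fun z => ?_
    refine EReal.coe_le_coe_iff.2 ?_
    rw [le_div_iff₀ hL0, mul_comm, ← real_inner_smul_left, ← hSra, hSg]
    refine (dual_le p (hw.lips _ (hzs 0) _ (hzs k)) z.1).trans (le_trans ?_ hP)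
    exact mul_le_of_le_one_right (by positivity) z.2
  · -- epsilon bound
    have hj : ∀ j ∈ Finset.Icc 1 k, c0 - ⟪S, zt j⟫ ≤ 3 * M / m * (2 * dw0 + ρ) := by
      intro j hj
      obtain ⟨hj1, hj2⟩ := Finset.mem_Icc.1 hj
      have h1 := sumstep k (zt j)
      rw [hF] at h1
      have h2 := hnn _ (hzs k) _ (hzt j hj1)
      have h3 : ∀ z, (0 : E) ∈ T z →
          breg w gw (zs 0) (zt j) ≤ 3 * M / m * (2 * breg w gw (zs 0) z + ρ) := by
        intro z hz
        have hzZ := hsZ z hz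
        have t1 := three_pt w gw (zs 0) (zs j) (zt j)
        have t2 := three_pt w gw (zs 0) (zs j) z
        have hA := hstr _ (hzs 0) _ hzZ
        have hB := hstr _ (hzs j) _ hzZ
        have hC := hstr _ (hzs j) _ (hzt j hj1)
        have hBA := desc0 z hz j
        have hCρ := hρi j hj1 hj2
        have i1 := dual_le p (hw.lips _ (hzs j) _ (hzs 0)) (zt j - zs j)
        have i2 := dual_le p (hw.lips _ (hzs 0) _ (hzs j)) (z - zs j)
        rw [← neg_sub (gw (zs j)), inner_neg_left, map_sub_rev p (zs 0) (zs j),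
          map_sub_rev p z (zs j)] at i2
        rw [map_sub_rev p (zt j) (zs j)] at i1
        have hP : p (zs j - zs 0) ≤ p (zs 0 - z) + p (zs j - z) := by
          have : zs j - zs 0 = (zs j - z) - (zs 0 - z) := by abel
          rw [this, add_comm]; exact map_sub_le_add p _ _
        set A := breg w gw (zs 0) z
        set B := breg w gw (zs j) z
        set C := breg w gw (zs j) (zt j)
        set a := p (zs 0 - z)
        set b := p (zs j - z)
        set c := p (zs j - zt j)
        set P := p (zs j - zs 0)
        have hb0 : 0 ≤ b := apply_nonneg _ _
        have hc00 : 0 ≤ c := apply_nonneg _ _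
        have q1 : P * (b + c) ≤ a^2 + 2 * b^2 + c^2 := by
          have := mul_le_mul_of_nonneg_right hP (by linarith : 0 ≤ b + c)
          nlinarith [sq_nonneg (a - b), sq_nonneg (a - c), sq_nonneg (b - c)]
        have q2 : breg w gw (zs 0) (zt j) ≤ C + A - B + M * (P * (b + c)) := by
          have h9 : M * (P * (b + c)) = M * P * b + M * P * c := by ring
          linarith
        have q3 : M * (P * (b + c)) ≤ M / m * (2 * A + 4 * B + 2 * C) := by
          have : P * (b + c) * m ≤ 2 * A + 4 * B + 2 * C := by
            have := mul_le_mul_of_nonneg_right q1 hm.le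
            linarith
          have h9 : M * (P * (b + c)) = M / m * (P * (b + c) * m) := by field_simp
          rw [h9]
          exact mul_le_mul_of_nonneg_left this (by positivity)
        have hC0 : 0 ≤ C := le_trans (by positivity) hC
        have q4 : C + A - B ≤ M / m * (C + A - B) :=
          le_mul_of_one_le_left (by linarith) hκ
        have q5 : M / m * (C + A - B + (2 * A + 4 * B + 2 * C)) ≤ M / m * (3 * (2 * A + ρ)) :=
          mul_le_mul_of_nonneg_left (by linarith) (by positivity)
        have q6 : 3 * M / m * (2 * A + ρ) = M / m * (3 * (2 * A + ρ)) := by ring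
        rw [q6]; linarith
      have hpos : 0 < 3 * M / m := by positivity
      have h4 : (breg w gw (zs 0) (zt j) / (3 * M / m) - ρ) / 2 ≤ dw0 := by
        refine hinf _ fun z hz => ?_
        have := h3 z hz
        rw [← div_le_iff₀' hpos] at this
        linarith
      have h5 : breg w gw (zs 0) (zt j) / (3 * M / m) ≤ 2 * dw0 + ρ := by linarith
      rw [div_le_iff₀' hpos] at h5
      linarith
    have hsum : ∑ j ∈ Finset.Icc 1 k, lam j * (c0 - ⟪S, zt j⟫) ≤
        ∑ j ∈ Finset.Icc 1 k, lam j * (3 * M / m * (2 * dw0 + ρ)) :=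
      Finset.sum_le_sum fun j hjm => mul_le_mul_of_nonneg_left (hj j hjm)
        (hseq.lam_pos j (Finset.mem_Icc.1 hjm).1).le
    have e1 : ∑ j ∈ Finset.Icc 1 k, lam j * (c0 - ⟪S, zt j⟫) = Lam k * (Lam k * εa k) := by
      have : ∀ j, lam j * (c0 - ⟪S, zt j⟫) = lam j * c0 - ⟪S, lam j • zt j⟫ := by
        intro j; rw [real_inner_smul_right]; ring
      simp_rw [this, Finset.sum_sub_distrib]
      rw [← Finset.sum_mul, ← inner_sum, hza', ← hLam, hεa', hSra, real_inner_smul_left,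
        real_inner_smul_right]
      ring
    rw [e1, ← Finset.sum_mul, ← hLam] at hsum
    have h6 := le_of_mul_le_mul_left hsum hL0
    rw [← mul_div_assoc, le_div_iff₀ hL0]
    linarith
  · -- part (a)
    intro hσ
    have h1σ : 0 < 1 - σ := by linarith
    rw [hρ]
    refine Finset.sup'_le _ _ fun i hi => ?_
    obtain ⟨hi1, hi2⟩ := Finset.mem_Icc.1 hi
    have h1 : (1 - σ) * breg w gw (zs (i - 1)) (zt i) ≤ dw0 := by
      refine hinf _ fun z hz => ?_
      have h2 := desc z hz i hi1
      have h3 := desc0 z hz (i - 1)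
      have h4 := hnn _ (hzs i) _ (hsZ z hz)
      linarith
    have h5 := hseq.err i hi1
    have h6 : 0 ≤ lam i * ε i := mul_nonneg (hseq.lam_pos i hi1).le (hseq.eps_nonneg i hi1)
    rw [le_div_iff₀ h1σ]
    nlinarith [mul_le_mul_of_nonneg_left h1 hσ0]
  · -- part (b)
    intro hbdd
    set D := sSup Dset with hD
    rw [hρ]
    refine Finset.sup'_le _ _ fun i hi => ?_
    obtain ⟨hi1, hi2⟩ := Finset.mem_Icc.1 hi
    obtain ⟨Cp, hCp0, hCp⟩ := sn_bound p
    have key : ∀ z, (0 : E) ∈ T z →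
        breg w gw (zs i) (zt i) ≤ 2 * M / m * (breg w gw (zs 0) z + D) := by
      intro z hz
      have hzZ := hsZ z hz
      have hdense := dense_seg hT hz (hseq.eps_nonneg i hi1) (hincl i hi1)
      have hDq : ∀ q, (T q).Nonempty → m / 2 * (p (z - q))^2 ≤ D := by
        intro q hq
        have h1 : min (breg w gw z q) (breg w gw q z) ≤ D := by
          refine le_csSup hbdd ?_
          rw [hDset]
          exact ⟨z, ⟨0, hz⟩, q, hq, rfl⟩
        refine le_trans (le_min (hstr _ hzZ _ (hdom q hq)) ?_) h1
        rw [map_sub_rev p z q]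
        exact hstr _ (hdom q hq) _ hzZ
      have hD0 : 0 ≤ D := le_trans (by positivity) (hDq z ⟨0, hz⟩)
      have hd : p (z - zt i) ≤ Real.sqrt (2 * D / m) := by
        refine le_of_forall_pos_le_add fun δ hδ => ?_
        obtain ⟨q, hq, hqd⟩ := hdense 1 zero_le_one le_rfl (δ / Cp) (by positivity)
        have e : z + (1 : ℝ) • (zt i - z) = zt i := by rw [one_smul]; abel
        rw [e] at hqd
        have h1 : p (z - q) ≤ Real.sqrt (2 * D / m) := by
          refine Real.le_sqrt_of_sq_le ?_
          rw [le_div_iff₀ hm]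
          linarith [hDq q hq]
        have h2 : p (q - zt i) ≤ δ := by
          refine (hCp _).trans ?_
          have := mul_le_mul_of_nonneg_left hqd hCp0.le
          rwa [mul_div_cancel₀ _ hCp0.ne'] at this
        have h3 : z - zt i = (z - q) + (q - zt i) := by abel
        rw [h3]
        refine (map_add_le_add p _ _).trans (by linarith)
      have hd2 : (p (z - zt i))^2 * m ≤ 2 * D := by
        have := pow_le_pow_left₀ (apply_nonneg p _) hd 2
        rw [Real.sq_sqrt (by positivity), le_div_iff₀ hm] at this
        exact this
      have hup := breg_upper hm hmM hw hzZ (hzt i hi1) (by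
        intro s hs0 hs1 δ hδ
        obtain ⟨q, hq, hqd⟩ := hdense s hs0 hs1 (δ / Cp) (by positivity)
        refine ⟨q, hdom q hq, (hCp _).trans ?_⟩
        have := mul_le_mul_of_nonneg_left hqd hCp0.le
        rwa [mul_div_cancel₀ _ hCp0.ne'] at this)
      rw [map_sub_rev p (zt i) z] at hup
      have t1 := three_pt w gw (zs i) z (zt i)
      have i1 := dual_le p (hw.lips _ hzZ _ (hzs i)) (zt i - z)
      rw [map_sub_rev p (zt i) z, map_sub_rev p z (zs i)] at i1
      have hB := hstr _ (hzs i) _ hzZ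
      have hBA := desc0 z hz i
      set A := breg w gw (zs 0) z
      set B := breg w gw (zs i) z
      set b := p (zs i - z)
      set d := p (z - zt i)
      have hA0 : 0 ≤ A := hnn _ (hzs 0) _ hzZ
      have q1 : M / 2 * d^2 + M * b * d ≤ M / m * (2 * D + A) := by
        have h1 : (d^2 + b^2 / 2) * m ≤ 2 * D + A := by nlinarith
        have h2 : M / m * ((d^2 + b^2 / 2) * m) = M * (d^2 + b^2 / 2) := by field_simp
        have h3 := mul_le_mul_of_nonneg_left h1 (by positivity : 0 ≤ M / m)
        rw [h2] at h3
        nlinarith [mul_nonneg hM.le (sq_nonneg (b - d))]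
      have q2 : A ≤ M / m * A := le_mul_of_one_le_left hA0 hκ
      have q3 : 2 * M / m * (A + D) = M / m * (2 * D + A) + M / m * A := by ring
      rw [q3]
      linarith
    have hpos : 0 < 2 * M / m := by positivity
    have h4 : breg w gw (zs i) (zt i) / (2 * M / m) - D ≤ dw0 := by
      refine hinf _ fun z hz => ?_
      have := key z hz
      rw [← div_le_iff₀' hpos] at this
      linarith
    have h5 : breg w gw (zs i) (zt i) / (2 * M / m) ≤ dw0 + D := by linarith
    rwa [div_le_iff₀' hpos] at h5
end

section
/- Let (λ_k, z_k, z̃_k, ε_k) be NE-HPE sequences for T with parameter σ, distance generating function w ∈ 𝒟_Z(m,M), and initial point z₀ ∈ Z, and set r_k := (1/λ_k)(∇w(z_{k−1}) − ∇w(z_k)). Assume that for some infinite index set 𝒦 ⊆ ℕ and some z̃ ∈ 𝒵 one has (r_k, ε_k) → (0,0) and z̃_k → z̃ along k ∈ 𝒦. Then 0 ∈ T(z̃) and z̃ ∈ Z. If, in addition, (dw)_{z_k}(z̃_k) → 0 along k ∈ 𝒦, then (dw)_{z_k}(z̃) → 0 as k → ∞ (over all k). -/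
open RealInnerProductSpace Filter

theorem dual_bound {E : Type*} [NormedAddCommGroup E] [InnerProductSpace ℝ E]
    (p : Seminorm ℝ E) (v : E) (C : ℝ) (h : dualSN ⇑p v ≤ (C : EReal)) (x : E) :
    ⟪v, x⟫ ≤ C * p x := by
  have key : ∀ d : ℝ, 0 < d → ⟪v, x⟫ ≤ C * (p x + d) := by
    intro d hd
    have hp : 0 ≤ p x := apply_nonneg p x
    have hpos : 0 < p x + d := by linarith
    have h1 : p ((p x + d)⁻¹ • x) ≤ 1 := by
      rw [map_smul_eq_mul, Real.norm_of_nonneg (inv_nonneg.2 hpos.le), inv_mul_le_iff₀ hpos]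
      linarith
    have h2 : ((⟪v, (p x + d)⁻¹ • x⟫ : ℝ) : EReal) ≤ (C : EReal) :=
      le_trans (le_iSup (fun z : {z : E // p z ≤ 1} => ((⟪v, z.1⟫ : ℝ) : EReal))
        ⟨(p x + d)⁻¹ • x, h1⟩) h
    have h3 : ⟪v, (p x + d)⁻¹ • x⟫ ≤ C := by exact_mod_cast h2
    rw [inner_smul_right, inv_mul_le_iff₀ hpos] at h3
    linarith
  have ht : Tendsto (fun d : ℝ => C * (p x + d)) (nhdsWithin 0 (Set.Ioi 0))
      (nhds (C * (p x + 0))) := by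
    apply Tendsto.mono_left _ nhdsWithin_le_nhds
    exact (Continuous.tendsto (by fun_prop) 0)
  rw [add_zero] at ht
  exact ge_of_tendsto ht (by filter_upwards [self_mem_nhdsWithin] with d hd using key d hd)

theorem mem_of_related {E : Type*} [NormedAddCommGroup E] [InnerProductSpace ℝ E]
    (T : E → Set E) (hT : MaxMonoOp T) (z t : E)
    (h : ∀ z' t' : E, t' ∈ T z' → 0 ≤ ⟪z - z', t - t'⟫) : t ∈ T z := by
  have hmono : MonoOp (fun x => T x ∪ {s | x = z ∧ s = t}) := by
    rintro a b s s' (hs | ⟨rfl, rfl⟩) (hs' | ⟨rfl, rfl⟩)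
    · exact hT.1 _ _ _ _ hs hs'
    · have := h a s hs
      rwa [← neg_sub a b, ← neg_sub s s', inner_neg_neg] at this
    · exact h _ _ hs'
    · simp
  have := hT.2 _ hmono (fun x => Set.subset_union_left)
  rw [← this]
  exact Or.inr ⟨rfl, rfl⟩

/-- If the residuals vanish and z̃_k converges along an infinite index
set 𝒦, then the limit z̃ solves the inclusion and lies in Z; if moreover the Bregman
distances (dw)_{z_k}(z̃_k) vanish along 𝒦, then (dw)_{z_k}(z̃) → 0 over all k. -/
theorem stmt9
    {E : Type*} [NormedAddCommGroup E] [InnerProductSpace ℝ E] [FiniteDimensional ℝ E]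
    (Z : Set E) (p : Seminorm ℝ E) (m M : ℝ) (hm : 0 < m) (hmM : m ≤ M)
    (w : E → ℝ) (gw : E → E) (hw : IsDGF Z p m M w gw)
    (T : E → Set E) (hT : MaxMonoOp T)
    (hdom : ∀ z, (T z).Nonempty → z ∈ Z) (hsol : ∃ z, 0 ∈ T z)
    (σ : ℝ) (hσ0 : 0 ≤ σ) (hσ1 : σ ≤ 1)
    (lam : ℕ → ℝ) (zs zt : ℕ → E) (ε : ℕ → ℝ)
    (hseq : NEHPE Z w gw T σ lam zs zt ε)
    (r : ℕ → E) (hr : ∀ k, r k = (1 / lam k) • (gw (zs (k - 1)) - gw (zs k)))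
    (K : Set ℕ) (hK : K.Infinite) (ztil : E)
    (hrlim : Tendsto r (atTop ⊓ Filter.principal K) (nhds 0))
    (hεlim : Tendsto ε (atTop ⊓ Filter.principal K) (nhds 0))
    (hztlim : Tendsto zt (atTop ⊓ Filter.principal K) (nhds ztil)) :
    ((0 : E) ∈ T ztil ∧ ztil ∈ Z)
    ∧ (Tendsto (fun k => breg w gw (zs k) (zt k)) (atTop ⊓ Filter.principal K) (nhds 0) →
        Tendsto (fun k => breg w gw (zs k) ztil) atTop (nhds 0)) := by
  have hne : (atTop ⊓ Filter.principal K).NeBot := by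
    rw [← Filter.frequently_mem_iff_neBot]
    exact Nat.frequently_atTop_iff_infinite.2 hK
  have hge : ∀ᶠ k in atTop ⊓ Filter.principal K, 1 ≤ k :=
    (eventually_ge_atTop 1).filter_mono inf_le_left
  have h0 : (0 : E) ∈ T ztil := by
    apply mem_of_related T hT
    intro z' t' ht'
    have hl : Tendsto (fun k => ⟪zt k - z', r k - t'⟫ + ε k) (atTop ⊓ Filter.principal K)
        (nhds (⟪ztil - z', 0 - t'⟫ + 0)) :=
      ((hztlim.sub_const z').inner (hrlim.sub_const t')).add hεlim
    rw [add_zero] at hl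
    refine ge_of_tendsto hl ?_
    filter_upwards [hge] with k hk
    have := hseq.incl k hk z' t' ht'
    rw [← hr k, real_inner_comm] at this
    linarith
  have hZ : ztil ∈ Z := hdom _ ⟨0, h0⟩
  refine ⟨⟨h0, hZ⟩, fun hb => ?_⟩
  have hnn : ∀ z ∈ Z, ∀ z' ∈ Z, 0 ≤ breg w gw z z' := fun z hz z' hz' =>
    le_trans (by positivity) (hw.strconv z hz z' hz')
  have hanti : Antitone (fun k => breg w gw (zs k) ztil) := by
    apply antitone_nat_of_succ_le
    intro k
    have hk : 1 ≤ k + 1 := by omega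
    have hl := hseq.lam_pos _ hk
    have hi := hseq.incl _ hk ztil 0 h0
    have he := hseq.err _ hk
    simp only [Nat.add_sub_cancel] at hi he
    have hn := hnn _ (hseq.zs_mem k) _ (hseq.zt_mem _ hk)
    have hσ : σ * breg w gw (zs k) (zt (k+1)) ≤ breg w gw (zs k) (zt (k+1)) := by nlinarith
    rw [sub_zero, real_inner_smul_left] at hi
    have hi2 : -(lam (k+1) * ε (k+1)) ≤ ⟪gw (zs k) - gw (zs (k+1)), zt (k+1) - ztil⟫ := by
      have h3 := mul_le_mul_of_nonneg_left hi hl.le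
      rw [← mul_assoc, mul_one_div_cancel hl.ne'] at h3
      linarith
    have h3 : breg w gw (zs k) ztil - breg w gw (zs (k+1)) ztil
        = breg w gw (zs k) (zt (k+1)) - breg w gw (zs (k+1)) (zt (k+1))
          + ⟪gw (zs k) - gw (zs (k+1)), zt (k+1) - ztil⟫ := by
      simp only [breg, inner_sub_left, inner_sub_right]
      ring
    linarith
  set B := Real.sqrt (breg w gw (zs 0) ztil / (m / 2)) with hB
  have hpB : ∀ k, p (ztil - zs k) ≤ B := by
    intro k
    apply Real.le_sqrt_of_sq_le
    rw [le_div_iff₀ (by positivity)]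
    have h1 := hw.strconv _ (hseq.zs_mem k) _ hZ
    have h2 : breg w gw (zs k) ztil ≤ breg w gw (zs 0) ztil := hanti (Nat.zero_le k)
    rw [map_sub_rev] at h1
    unfold breg at h2 ⊢
    linarith
  have hpc : Continuous p := by
    exact p.convexOn.locallyLipschitz.continuous
  have hwc : ContinuousAt w ztil := (hw.diff _ hZ).continuousAt
  have hup : Tendsto (fun k => breg w gw (zs k) (zt k)
      + (w ztil - w (zt k) - ⟪gw ztil, ztil - zt k⟫) + M * B * p (ztil - zt k))
      (atTop ⊓ Filter.principal K) (nhds 0) := by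
    have hd : Tendsto (fun k => ztil - zt k) (atTop ⊓ Filter.principal K) (nhds 0) := by
      simpa using hztlim.const_sub ztil
    have h1 : Tendsto (fun k => w ztil - w (zt k)) (atTop ⊓ Filter.principal K) (nhds 0) := by
      simpa using (hwc.tendsto.comp hztlim).const_sub (w ztil)
    have h2 : Tendsto (fun k => ⟪gw ztil, ztil - zt k⟫) (atTop ⊓ Filter.principal K)
        (nhds 0) := by
      simpa using (tendsto_const_nhds (x := gw ztil)).inner hd
    have h3 : Tendsto (fun k => p (ztil - zt k)) (atTop ⊓ Filter.principal K) (nhds 0) := by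
      simpa [Function.comp_def] using (hpc.tendsto 0).comp hd
    simpa using (hb.add (h1.sub h2)).add (h3.const_mul (M * B))
  have hle : ∀ k, 1 ≤ k → breg w gw (zs k) ztil ≤ breg w gw (zs k) (zt k)
      + (w ztil - w (zt k) - ⟪gw ztil, ztil - zt k⟫) + M * B * p (ztil - zt k) := by
    intro k hk
    have h1 := dual_bound p _ _ (hw.lips _ hZ _ (hseq.zs_mem k)) (ztil - zt k)
    have h2 : M * p (ztil - zs k) * p (ztil - zt k) ≤ M * B * p (ztil - zt k) :=
      mul_le_mul_of_nonneg_right (mul_le_mul_of_nonneg_left (hpB k) (hm.le.trans hmM))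
        (apply_nonneg p _)
    have h3 : breg w gw (zs k) ztil = breg w gw (zs k) (zt k)
      + (w ztil - w (zt k) - ⟪gw ztil, ztil - zt k⟫)
      + ⟪gw ztil - gw (zs k), ztil - zt k⟫ := by
      simp only [breg, inner_sub_left, inner_sub_right]
      ring
    linarith
  rw [Metric.tendsto_atTop]
  intro e he
  obtain ⟨N, hN1, hN2⟩ := (hge.and (hup.eventually (gt_mem_nhds he))).exists
  refine ⟨N, fun n hn => ?_⟩
  have h1 : breg w gw (zs n) ztil ≤ breg w gw (zs N) ztil := hanti hn
  have h2 := hle N hN1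
  rw [Real.dist_eq, sub_zero, abs_of_nonneg (hnn _ (hseq.zs_mem n) _ hZ)]
  linarith
end

section
/- Let (λ_k, z_k, z̃_k, ε_k) be NE-HPE sequences for T with parameter σ, distance generating function w ∈ 𝒟_Z(m,M), and initial point z₀ ∈ Z. Assume σ < 1, Σ_{k=1}^{∞} λ_k² = ∞, and that the sequence {z̃_k} is bounded. Then there exists z̃ with 0 ∈ T(z̃) and z̃ ∈ Z such that (dw)_{z_k}(z̃) → 0 and (dw)_{z̃_k}(z̃) → 0 as k → ∞. -/
open RealInnerProductSpace Filter

theorem aux_dual {E : Type*} [NormedAddCommGroup E] [InnerProductSpace ℝ E]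
    (p : Seminorm ℝ E) (v : E) (A : ℝ) (h : dualSN ⇑p v ≤ ((A : ℝ) : EReal)) (x : E) :
    ⟪v, x⟫ ≤ A * p x := by
  have key : ∀ y : E, p y ≤ 1 → ⟪v, y⟫ ≤ A := by
    intro y hy
    have h1 : ((⟪v, y⟫ : ℝ) : EReal) ≤ dualSN ⇑p v :=
      le_iSup (fun z : {z : E // p z ≤ 1} => ((⟪v, z.1⟫ : ℝ) : EReal)) ⟨y, hy⟩
    exact_mod_cast h1.trans h
  have hA : 0 ≤ A := by simpa using key 0 (by simp)
  have hc : ∀ c : ℝ, p x < c → ⟪v, x⟫ ≤ A * c := by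
    intro c hc
    have hc0 : 0 < c := (apply_nonneg p x).trans_lt hc
    have h1 := key (c⁻¹ • x) (by
      rw [map_smul_eq_mul, Real.norm_of_nonneg (by positivity), inv_mul_le_iff₀ hc0]
      linarith)
    rw [inner_smul_right, inv_mul_le_iff₀ hc0] at h1
    linarith
  by_contra! hlt
  have h2 := hc (p x + (⟪v, x⟫ - A * p x) / (A + 1)) (by
    have : 0 < (⟪v, x⟫ - A * p x) / (A + 1) := by
      apply div_pos <;> linarith
    linarith)
  set g := (⟪v, x⟫ - A * p x) / (A + 1) with hg
  have hg0 : 0 < g := by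
    apply div_pos <;> linarith
  have hg1 : g * (A + 1) = ⟪v, x⟫ - A * p x := by
    rw [hg]; field_simp
  nlinarith

theorem aux_breg_le {E : Type*} [NormedAddCommGroup E] [InnerProductSpace ℝ E]
    [FiniteDimensional ℝ E] {Z : Set E} {p : Seminorm ℝ E} {m M : ℝ} (hm : 0 < m)
    {w : E → ℝ} {gw : E → E} (hw : IsDGF Z p m M w gw) {z z' : E} (hz : z ∈ Z) (hz' : z' ∈ Z) :
    breg w gw z z' ≤ M * p (z - z') ^ 2 := by
  have h1 := hw.strconv z' hz' z hz
  have h2 := aux_dual p _ _ (hw.lips z hz z' hz') (z - z')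
  have h3 : 0 ≤ m / 2 * p (z' - z) ^ 2 := by positivity
  unfold breg
  have e : ⟪gw z - gw z', z - z'⟫ = - ⟪gw z, z' - z⟫ - ⟪gw z', z - z'⟫ := by
    simp only [inner_sub_left, inner_sub_right]; ring
  rw [e] at h2
  nlinarith

theorem aux_seminorm {E : Type*} [NormedAddCommGroup E] [InnerProductSpace ℝ E]
    [FiniteDimensional ℝ E] (p : Seminorm ℝ E) : ∃ C : ℝ, 0 < C ∧ ∀ x, p x ≤ C * ‖x‖ := by
  let b := stdOrthonormalBasis ℝ E
  refine ⟨∑ i, p (b i) + 1, ?_, fun x => ?_⟩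
  · have : 0 ≤ ∑ i, p (b i) := Finset.sum_nonneg fun i _ => apply_nonneg p _
    linarith
  · have h1 : p x ≤ ∑ i, p (⟪b i, x⟫ • b i) := by
      conv_lhs => rw [← b.sum_repr' x]
      exact Finset.le_sum_of_subadditive p (map_zero p).le (map_add_le_add p) _ _
    have h2 : ∑ i, p (⟪b i, x⟫ • b i) ≤ ∑ i, p (b i) * ‖x‖ := by
      apply Finset.sum_le_sum
      intro i _
      rw [map_smul_eq_mul, mul_comm]
      have h3 : ‖⟪b i, x⟫‖ ≤ ‖x‖ := by
        have := norm_inner_le_norm (𝕜 := ℝ) (b i) x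
        simpa using this
      exact mul_le_mul_of_nonneg_left h3 (apply_nonneg p _)
    rw [← Finset.sum_mul] at h2
    nlinarith [norm_nonneg x]

theorem aux_mem {E : Type*} [NormedAddCommGroup E] [InnerProductSpace ℝ E]
    {T : E → Set E} (hT : MaxMonoOp T) (z t : E)
    (h : ∀ z' t', t' ∈ T z' → 0 ≤ ⟪z - z', t - t'⟫) : t ∈ T z := by
  have h1 := hT.2 (fun y => T y ∪ {s | y = z ∧ s = t}) ?_ (fun y => Set.subset_union_left)
  · rw [← h1]; right; exact ⟨rfl, rfl⟩
  · intro a a' s s' hs hs'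
    rcases hs with hs | ⟨rfl, rfl⟩ <;> rcases hs' with hs' | ⟨rfl, rfl⟩
    · exact hT.1 _ _ _ _ hs hs'
    · have := h _ _ hs
      rw [← neg_sub a a', ← neg_sub s s', inner_neg_neg] at this
      exact this
    · exact h _ _ hs'
    · simp

/-- If σ < 1, Σ λ_k² = ∞ and {z̃_k} is bounded, then there is a
solution z̃ ∈ Z of the inclusion with (dw)_{z_k}(z̃) → 0 and (dw)_{z̃_k}(z̃) → 0. -/
theorem stmt10
    {E : Type*} [NormedAddCommGroup E] [InnerProductSpace ℝ E] [FiniteDimensional ℝ E]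
    (Z : Set E) (p : Seminorm ℝ E) (m M : ℝ) (hm : 0 < m) (hmM : m ≤ M)
    (w : E → ℝ) (gw : E → E) (hw : IsDGF Z p m M w gw)
    (T : E → Set E) (hT : MaxMonoOp T)
    (hdom : ∀ z, (T z).Nonempty → z ∈ Z) (hsol : ∃ z, 0 ∈ T z)
    (σ : ℝ) (hσ0 : 0 ≤ σ) (hσ1 : σ ≤ 1)
    (lam : ℕ → ℝ) (zs zt : ℕ → E) (ε : ℕ → ℝ)
    (hseq : NEHPE Z w gw T σ lam zs zt ε)
    (r : ℕ → E) (hr : ∀ k, r k = (1 / lam k) • (gw (zs (k - 1)) - gw (zs k)))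
    (hσlt : σ < 1)
    (hlamsq : Tendsto (fun n : ℕ => ∑ k ∈ Finset.Icc 1 n, lam k ^ 2) atTop atTop)
    (hbdd : Bornology.IsBounded (Set.range zt)) :
    ∃ ztil : E, (0 : E) ∈ T ztil ∧ ztil ∈ Z
      ∧ Tendsto (fun k => breg w gw (zs k) ztil) atTop (nhds 0)
      ∧ Tendsto (fun k => breg w gw (zt k) ztil) atTop (nhds 0) := by
  obtain ⟨C, hC, hpC⟩ := aux_seminorm p
  have hM : 0 < M := hm.trans_le hmM
  have bnn : ∀ z ∈ Z, ∀ z' ∈ Z, m / 2 * p (z - z') ^ 2 ≤ breg w gw z z' := hw.strconv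
  have bnn0 : ∀ z ∈ Z, ∀ z' ∈ Z, 0 ≤ breg w gw z z' := fun z hz z' hz' =>
    le_trans (by positivity) (bnn z hz z' hz')
  have hzs := hseq.zs_mem
  have hzt : ∀ k, zt (k + 1) ∈ Z := fun k => hseq.zt_mem _ (by omega)
  have hl : ∀ k, 0 < lam (k + 1) := fun k => hseq.lam_pos _ (by omega)
  have he : ∀ k, 0 ≤ ε (k + 1) := fun k => hseq.eps_nonneg _ (by omega)
  have herr : ∀ k, breg w gw (zs (k + 1)) (zt (k + 1)) + lam (k + 1) * ε (k + 1)
      ≤ σ * breg w gw (zs k) (zt (k + 1)) := fun k => hseq.err (k + 1) (by omega)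
  have hincl : ∀ k, r (k + 1) ∈ epsEnl T (ε (k + 1)) (zt (k + 1)) := fun k => by
    rw [hr]; exact hseq.incl (k + 1) (by omega)
  have hlr : ∀ k, lam (k + 1) • r (k + 1) = gw (zs k) - gw (zs (k + 1)) := fun k => by
    rw [hr, smul_smul, mul_one_div_cancel (hl k).ne', one_smul]; rfl
  have hdesc : ∀ z, (0 : E) ∈ T z → ∀ k,
      (1 - σ) * breg w gw (zs k) (zt (k + 1)) ≤
        breg w gw (zs k) z - breg w gw (zs (k + 1)) z := by
    intro z hz k
    have h1 : -ε (k + 1) ≤ ⟪r (k + 1) - 0, zt (k + 1) - z⟫ := hincl k z 0 hz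
    rw [sub_zero] at h1
    have h2 : lam (k + 1) * ⟪r (k + 1), zt (k + 1) - z⟫
        = ⟪gw (zs k) - gw (zs (k + 1)), zt (k + 1) - z⟫ := by
      rw [← hlr, real_inner_smul_left]
    have h3 : breg w gw (zs k) z - breg w gw (zs (k + 1)) z =
        breg w gw (zs k) (zt (k + 1)) - breg w gw (zs (k + 1)) (zt (k + 1))
          + ⟪gw (zs k) - gw (zs (k + 1)), zt (k + 1) - z⟫ := by
      unfold breg
      simp only [inner_sub_left, inner_sub_right]; ring
    have h4 := mul_le_mul_of_nonneg_left h1 (hl k).le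
    have h5 := herr k
    linarith
  have hD0 : ∀ k, 0 ≤ breg w gw (zs k) (zt (k + 1)) := fun k => bnn0 _ (hzs k) _ (hzt k)
  have hanti : ∀ z, (0 : E) ∈ T z → Antitone (fun k => breg w gw (zs k) z) := by
    intro z hz
    refine antitone_nat_of_succ_le fun k => ?_
    have h1 := hdesc z hz k
    have h2 := mul_nonneg (sub_nonneg.2 hσ1) (hD0 k)
    linarith
  have hsumm : Summable (fun k => breg w gw (zs k) (zt (k + 1))) := by
    obtain ⟨z, hz⟩ := hsol
    have hzZ := hdom z ⟨0, hz⟩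
    refine summable_of_sum_range_le (c := breg w gw (zs 0) z / (1 - σ)) hD0 fun n => ?_
    rw [le_div_iff₀ (by linarith), mul_comm, Finset.mul_sum]
    have h1 := Finset.sum_le_sum (s := Finset.range n) fun k _ => hdesc z hz k
    rw [Finset.sum_range_sub'] at h1
    have h2 := bnn0 _ (hzs n) _ hzZ
    linarith
  have hD := hsumm.tendsto_atTop_zero
  have hσD : ∀ k, breg w gw (zs (k + 1)) (zt (k + 1)) + lam (k + 1) * ε (k + 1)
      ≤ breg w gw (zs k) (zt (k + 1)) := fun k => by
    have := herr k
    have := mul_le_mul_of_nonneg_right hσ1 (hD0 k)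
    linarith
  have hle : ∀ k, lam (k + 1) * ε (k + 1) ≤ breg w gw (zs k) (zt (k + 1)) := fun k => by
    have := hσD k
    have := bnn0 _ (hzs (k + 1)) _ (hzt k)
    linarith
  have hle0 : ∀ k, 0 ≤ lam (k + 1) * ε (k + 1) := fun k => mul_nonneg (hl k).le (he k)
  have hb : ∀ k, m / 2 * p (zs (k + 1) - zt (k + 1)) ^ 2 ≤ breg w gw (zs k) (zt (k + 1)) :=
    fun k => by
      have := hσD k
      have := bnn _ (hzs (k + 1)) _ (hzt k)
      have := hle0 k
      linarith
  have hd : ∀ k, p (zs k - zs (k + 1)) ^ 2 ≤ 8 / m * breg w gw (zs k) (zt (k + 1)) := by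
    intro k
    have h1 := bnn _ (hzs k) _ (hzt k)
    have h2 := hb k
    have h3 : p (zs k - zs (k + 1)) ≤ p (zs k - zt (k + 1)) + p (zs (k + 1) - zt (k + 1)) := by
      have := map_sub_le_add p (zs k - zt (k + 1)) (zs (k + 1) - zt (k + 1))
      simpa using this
    have h4 : p (zs k - zs (k + 1)) ^ 2 ≤
        (p (zs k - zt (k + 1)) + p (zs (k + 1) - zt (k + 1))) ^ 2 :=
      pow_le_pow_left₀ (apply_nonneg p _) h3 2
    rw [div_mul_eq_mul_div, le_div_iff₀ hm]
    nlinarith [mul_nonneg hm.le (sq_nonneg (p (zs k - zt (k + 1)) - p (zs (k + 1) - zt (k + 1))))]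
  have hrb : ∀ k, lam (k + 1) * ‖r (k + 1)‖ ≤ M * C * p (zs k - zs (k + 1)) := by
    intro k
    have h1 := aux_dual p _ _ (hw.lips _ (hzs k) _ (hzs (k + 1))) (r (k + 1))
    rw [← hlr, real_inner_smul_left, real_inner_self_eq_norm_sq] at h1
    rcases (norm_nonneg (r (k + 1))).eq_or_lt with h0 | h0
    · rw [← h0, mul_zero]; positivity
    · have h2 : M * p (zs k - zs (k + 1)) * p (r (k + 1)) ≤
          M * p (zs k - zs (k + 1)) * (C * ‖r (k + 1)‖) :=
        mul_le_mul_of_nonneg_left (hpC _) (by positivity)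
      refine le_of_mul_le_mul_right ?_ h0
      linarith
  obtain ⟨K, hK⟩ : ∃ K : ℝ, ∀ k, lam (k + 1) ^ 2 * (‖r (k + 1)‖ ^ 2 + ε (k + 1) / lam (k + 1))
      ≤ K * breg w gw (zs k) (zt (k + 1)) := by
    refine ⟨(M * C) ^ 2 * (8 / m) + 1, fun k => ?_⟩
    have h1 := pow_le_pow_left₀ (mul_nonneg (hl k).le (norm_nonneg _)) (hrb k) 2
    have h2 := mul_le_mul_of_nonneg_left (hd k) (sq_nonneg (M * C))
    have h3 : lam (k + 1) ^ 2 * (‖r (k + 1)‖ ^ 2 + ε (k + 1) / lam (k + 1)) =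
        (lam (k + 1) * ‖r (k + 1)‖) ^ 2 + lam (k + 1) * ε (k + 1) := by
      have := (hl k).ne'
      field_simp
    rw [h3]
    have := hle k
    nlinarith
  have hfreq : ∀ n : ℕ, ∃ᶠ k in atTop,
      ‖r (k + 1)‖ ^ 2 + ε (k + 1) / lam (k + 1) < 1 / ((n : ℝ) + 1) := by
    intro n hcon
    have hn : (0 : ℝ) < (n : ℝ) + 1 := by positivity
    have hs : Summable (fun k => lam (k + 1) ^ 2) := by
      refine Summable.of_norm_bounded_eventually_nat
        (hsumm.mul_left (((n : ℝ) + 1) * K)) ?_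
      filter_upwards [hcon] with k hk
      rw [Real.norm_of_nonneg (sq_nonneg _)]
      have h1 := mul_le_mul_of_nonneg_left (not_lt.1 hk) (sq_nonneg (lam (k + 1)))
      have h2 := h1.trans (hK k)
      rw [mul_one_div, div_le_iff₀ hn] at h2
      linarith
    have h3 := hs.hasSum.tendsto_sum_nat
    refine not_tendsto_nhds_of_tendsto_atTop hlamsq _ (h3.congr fun j => ?_)
    rw [Finset.range_eq_Ico, Finset.sum_Ico_add' (fun k => lam k ^ 2) 0 j 1]
    rfl
  obtain ⟨φ, hφ, hφr⟩ := extraction_forall_of_frequently hfreq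
  obtain ⟨zl, -, ψ, hψ, hlim⟩ := tendsto_subseq_of_bounded hbdd
    (fun n => Set.mem_range_self (f := zt) (φ n + 1))
  have hθ : Tendsto (fun n => φ (ψ n)) atTop atTop := hφ.tendsto_atTop.comp hψ.tendsto_atTop
  have hq : Tendsto (fun n => ‖r (φ (ψ n) + 1)‖ ^ 2 + ε (φ (ψ n) + 1) / lam (φ (ψ n) + 1))
      atTop (nhds 0) := by
    refine squeeze_zero (fun n => ?_) (fun n => (hφr (ψ n)).le)
      (tendsto_one_div_add_atTop_nhds_zero_nat.comp hψ.tendsto_atTop)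
    exact add_nonneg (sq_nonneg _) (div_nonneg (he _) (hl _).le)
  have hsqrt : ∀ {f : ℕ → ℝ}, (∀ n, 0 ≤ f n) → Tendsto (fun n => f n ^ 2) atTop (nhds 0) →
      Tendsto f atTop (nhds 0) := by
    intro f hf h
    have h1 := (Real.continuous_sqrt.tendsto 0).comp h
    rw [Real.sqrt_zero] at h1
    exact h1.congr fun n => Real.sqrt_sq (hf n)
  have hr0 : Tendsto (fun n => r (φ (ψ n) + 1)) atTop (nhds 0) := by
    rw [tendsto_zero_iff_norm_tendsto_zero]
    refine hsqrt (fun n => norm_nonneg _) (squeeze_zero (fun n => sq_nonneg _) (fun n => ?_) hq)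
    exact le_add_of_nonneg_right (div_nonneg (he _) (hl _).le)
  have hε0 : Tendsto (fun n => ε (φ (ψ n) + 1)) atTop (nhds 0) := by
    have h1 := hq.mul (hD.comp hθ)
    rw [mul_zero] at h1
    refine hsqrt (fun n => he _) (squeeze_zero (fun n => sq_nonneg _) (fun n => ?_) h1)
    have h2 : ε (φ (ψ n) + 1) ^ 2 = ε (φ (ψ n) + 1) / lam (φ (ψ n) + 1) *
        (lam (φ (ψ n) + 1) * ε (φ (ψ n) + 1)) := by
      have := (hl (φ (ψ n))).ne'
      field_simp
    rw [h2]
    exact mul_le_mul (le_add_of_nonneg_left (sq_nonneg _)) (hle _) (hle0 _)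
      (add_nonneg (sq_nonneg _) (div_nonneg (he _) (hl _).le))
  have hlim' : Tendsto (fun n => zt (φ (ψ n) + 1)) atTop (nhds zl) := hlim
  have hzl : (0 : E) ∈ T zl := by
    refine aux_mem hT zl 0 fun z' t' ht' => ?_
    have h1 : Tendsto (fun n => ⟪r (φ (ψ n) + 1) - t', zt (φ (ψ n) + 1) - z'⟫) atTop
        (nhds ⟪0 - t', zl - z'⟫) := (hr0.sub_const t').inner (hlim'.sub_const z')
    have h2 := le_of_tendsto_of_tendsto' hε0.neg h1 (fun n => hincl _ z' t' ht')
    rw [real_inner_comm]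
    simpa using h2
  have hzlZ := hdom zl ⟨0, hzl⟩
  have hpb : Tendsto (fun k => p (zs (k + 1) - zt (k + 1))) atTop (nhds 0) := by
    refine hsqrt (fun n => apply_nonneg p _) ?_
    have h1 := hD.const_mul (2 / m)
    rw [mul_zero] at h1
    refine squeeze_zero (fun n => sq_nonneg _) (fun k => ?_) h1
    have := hb k
    rw [div_mul_eq_mul_div, le_div_iff₀ hm]
    linarith
  have hpl : Tendsto (fun n => p (zt (φ (ψ n) + 1) - zl)) atTop (nhds 0) := by
    have h1 := (tendsto_iff_norm_sub_tendsto_zero.1 hlim').const_mul C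
    rw [mul_zero] at h1
    exact squeeze_zero (fun n => apply_nonneg p _) (fun n => hpC _) h1
  have hsub : Tendsto (fun n => breg w gw (zs (φ (ψ n) + 1)) zl) atTop (nhds 0) := by
    have h1 := (((hpb.comp hθ).add hpl).pow 2).const_mul M
    simp only [add_zero, ne_eq, OfNat.ofNat_ne_zero, not_false_eq_true, zero_pow, mul_zero] at h1
    refine squeeze_zero (fun n => bnn0 _ (hzs _) _ hzlZ) (fun n => ?_) h1
    refine (aux_breg_le hm hw (hzs _) hzlZ).trans ?_
    refine mul_le_mul_of_nonneg_left (pow_le_pow_left₀ (apply_nonneg p _) ?_ 2) hM.le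
    have := map_add_le_add p (zs (φ (ψ n) + 1) - zt (φ (ψ n) + 1)) (zt (φ (ψ n) + 1) - zl)
    simpa using this
  have hmain : Tendsto (fun k => breg w gw (zs k) zl) atTop (nhds 0) := by
    rw [Metric.tendsto_atTop] at hsub ⊢
    intro δ hδ
    obtain ⟨N, hN⟩ := hsub δ hδ
    refine ⟨φ (ψ N) + 1, fun k hk => ?_⟩
    have h1 := hN N le_rfl
    have h2 : breg w gw (zs k) zl ≤ breg w gw (zs (φ (ψ N) + 1)) zl := hanti zl hzl hk
    rw [Real.dist_eq, sub_zero, abs_of_nonneg (bnn0 _ (hzs _) _ hzlZ)] at h1 ⊢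
    linarith
  refine ⟨zl, hzl, hzlZ, hmain, ?_⟩
  rw [← tendsto_add_atTop_iff_nat 1]
  have hpz : Tendsto (fun k => p (zs (k + 1) - zl)) atTop (nhds 0) := by
    refine hsqrt (fun n => apply_nonneg p _) ?_
    have h1 := ((tendsto_add_atTop_iff_nat 1).2 hmain).const_mul (2 / m)
    rw [mul_zero] at h1
    refine squeeze_zero (fun n => sq_nonneg _) (fun k => ?_) h1
    have := bnn _ (hzs (k + 1)) _ hzlZ
    rw [div_mul_eq_mul_div, le_div_iff₀ hm]
    linarith
  have h1 := ((hpb.add hpz).pow 2).const_mul M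
  simp only [add_zero, ne_eq, OfNat.ofNat_ne_zero, not_false_eq_true, zero_pow, mul_zero] at h1
  refine squeeze_zero (fun n => bnn0 _ (hzt _) _ hzlZ) (fun n => ?_) h1
  refine (aux_breg_le hm hw (hzt _) hzlZ).trans ?_
  refine mul_le_mul_of_nonneg_left (pow_le_pow_left₀ (apply_nonneg p _) ?_ 2) hM.le
  have h3 : zt (n + 1) - zl = -(zs (n + 1) - zt (n + 1)) + (zs (n + 1) - zl) := by abel
  rw [h3]
  refine (map_add_le_add p _ _).trans ?_
  rw [map_neg_eq_map]
end

section
/- Let 𝒳 be a finite-dimensional real inner product space, A, B : 𝒳 ⇉ 𝒳 set-valued operators, γ > 0 and θ̃ > 0. Then the zero set of ℒ_{θ̃} + γC satisfies (ℒ_{θ̃} + γC)⁻¹(0) = {(u*, u*, x*) : γ⁻¹(x* − u*) ∈ A(u*) and −γ⁻¹(x* − u*) ∈ B(u*)} = {(u*, u*, u* + γa*) : a* ∈ A(u*), −a* ∈ B(u*)}. Consequently, if (u*, u*, x*) ∈ (ℒ_{θ̃} + γC)⁻¹(0), then 0 ∈ A(u*) + B(u*) and x* − u* ∈ γA(u*)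 (i.e., u* = J_{γA}(x*)). -/
open RealInnerProductSpace Filter Pointwise

/-- The inner product on the triple product space `𝒵 = 𝒳 × 𝒳 × 𝒳`. -/
noncomputable def inner3 {X : Type*} [NormedAddCommGroup X] [InnerProductSpace ℝ X]
    (z z' : X × X × X) : ℝ :=
  ⟪z.1, z'.1⟫ + ⟪z.2.1, z'.2.1⟫ + ⟪z.2.2, z'.2.2⟫

/-- The linear map `ℒ_θ̃(u,v,x) := ((1−θ̃)u + θ̃v − x, (θ̃−2)u + (1−θ̃)v + x, u − v)`. -/
def Lmap {X : Type*} [NormedAddCommGroup X] [InnerProductSpace ℝ X]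
    (θ : ℝ) (z : X × X × X) : X × X × X :=
  ((1 - θ) • z.1 + θ • z.2.1 - z.2.2,
    (θ - 2) • z.1 + (1 - θ) • z.2.1 + z.2.2,
    z.1 - z.2.1)

/-- The operator `(ℒ_θ̃ + γC)(u,v,x)` where `C(u,v,x) := A(u) × B(v) × {0}`. -/
def LC {X : Type*} [NormedAddCommGroup X] [InnerProductSpace ℝ X]
    (θ γ : ℝ) (A B : X → Set X) (z : X × X × X) : Set (X × X × X) :=
  {rr | ∃ a ∈ A z.1, ∃ b ∈ B z.2.1, rr = Lmap θ z + γ • ((a, b, (0 : X)) : X × X × X)}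

/-- `T : 𝒳 ⇉ 𝒳` is β-strongly monotone (β = 0 meaning just monotone). -/
def StrMono {X : Type*} [NormedAddCommGroup X] [InnerProductSpace ℝ X]
    (β : ℝ) (T : X → Set X) : Prop :=
  ∀ x x' w w' : X, w ∈ T x → w' ∈ T x' → β * ‖x - x'‖ ^ 2 ≤ ⟪w - w', x - x'⟫

/-- `T : 𝒳 ⇉ 𝒳` is maximal β-strongly monotone: it is β-strongly monotone and its graph
is not properly contained in the graph of another monotone operator. -/
def MaxStrMono {X : Type*} [NormedAddCommGroup X] [InnerProductSpace ℝ X]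
    (β : ℝ) (T : X → Set X) : Prop :=
  StrMono β T ∧ ∀ T' : X → Set X, StrMono 0 T' → (∀ x, T x ⊆ T' x) → T' = T

/-- Monotonicity of an operator on the triple product space `𝒵 = 𝒳³`. -/
def Mono3 {X : Type*} [NormedAddCommGroup X] [InnerProductSpace ℝ X]
    (T : (X × X × X) → Set (X × X × X)) : Prop :=
  ∀ z z' t t', t ∈ T z → t' ∈ T z' → 0 ≤ inner3 (z - z') (t - t')

/-- Maximal monotonicity of an operator on the triple product space `𝒵 = 𝒳³`. -/
def MaxMono3 {X : Type*} [NormedAddCommGroup X] [InnerProductSpace ℝ X]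
    (T : (X × X × X) → Set (X × X × X)) : Prop :=
  Mono3 T ∧ ∀ T', Mono3 T' → (∀ z, T z ⊆ T' z) → T' = T

/-- The ε-enlargement `T^[ε]` of an operator on `𝒳`. -/
def epsEnlX {X : Type*} [NormedAddCommGroup X] [InnerProductSpace ℝ X]
    (T : X → Set X) (ε : ℝ) (z : X) : Set X :=
  {t | ∀ z' t' : X, t' ∈ T z' → -ε ≤ ⟪t - t', z - z'⟫}

/-- The relaxed Peaceman–Rachford splitting method with relaxation parameter `θ` and
scaling `γ`: for `k ≥ 1`, `u_k = J_{γA}(x_{k−1})`, `v_k = J_{γB}(2u_k − x_{k−1})`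
(expressed through resolvent inclusions) and `x_k = x_{k−1} + θ(v_k − u_k)`. -/
structure RPR {X : Type*} [NormedAddCommGroup X] [InnerProductSpace ℝ X]
    (A B : X → Set X) (γ θ : ℝ) (x u v : ℕ → X) : Prop where
  resA : ∀ k, 1 ≤ k → x (k - 1) - u k ∈ γ • A (u k)
  resB : ∀ k, 1 ≤ k → (2 : ℝ) • u k - x (k - 1) - v k ∈ γ • B (v k)
  step : ∀ k, 1 ≤ k → x k = x (k - 1) + θ • (v k - u k)

/-- Pointwise characterization of the zeros of `LC`. -/
theorem zero_mem_LC_iff {X : Type*} [NormedAddCommGroup X] [InnerProductSpace ℝ X]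
    (A B : X → Set X) (γ θt : ℝ) (hγ : 0 < γ) (u v x : X) :
    (0 : X × X × X) ∈ LC θt γ A B (u, v, x) ↔
      v = u ∧ ∃ a ∈ A u, -a ∈ B u ∧ x = u + γ • a := by
  constructor
  · rintro ⟨a, ha, b, hb, h⟩
    simp only [Lmap, Prod.smul_mk, Prod.mk_add_mk, smul_zero, add_zero, Prod.ext_iff,
      Prod.fst_zero, Prod.snd_zero] at h ha hb
    obtain ⟨h1, h2, h3⟩ := h
    have hv : v = u := (sub_eq_zero.mp h3.symm).symm
    subst hv
    have e1 : x = v + γ • a := by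
      have : v + γ • a - x = (1 - θt) • v + θt • v - x + γ • a := by
        module
      rw [← h1] at this
      exact (sub_eq_zero.mp this).symm
    have e2 : γ • (a + b) = 0 := by
      have : γ • (a + b) = ((1 - θt) • v + θt • v - x + γ • a)
          + ((θt - 2) • v + (1 - θt) • v + x + γ • b) := by
        module
      rw [this, ← h1, ← h2, add_zero]
    have e3 : b = -a := by
      have := (smul_eq_zero.mp e2).resolve_left hγ.ne'
      exact (neg_eq_of_add_eq_zero_right this).symm
    exact ⟨rfl, a, ha, e3 ▸ hb, e1⟩
  · rintro ⟨rfl, a, ha, hb, rfl⟩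
    refine ⟨a, ha, -a, hb, ?_⟩
    simp only [Lmap, Prod.smul_mk, Prod.mk_add_mk, smul_zero, add_zero, Prod.ext_iff,
      Prod.fst_zero, Prod.snd_zero]
    refine ⟨?_, ?_, ?_⟩ <;> module

/-- Characterization of the zero set of `ℒ_θ̃ + γC`. -/
theorem stmt11 {X : Type*} [NormedAddCommGroup X] [InnerProductSpace ℝ X]
    [FiniteDimensional ℝ X]
    (A B : X → Set X) (γ θt : ℝ) (hγ : 0 < γ) (hθt : 0 < θt) :
    ({z : X × X × X | (0 : X × X × X) ∈ LC θt γ A B z}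
        = {z : X × X × X | ∃ u xx : X, z = (u, u, xx)
            ∧ γ⁻¹ • (xx - u) ∈ A u ∧ -(γ⁻¹ • (xx - u)) ∈ B u})
    ∧ ({z : X × X × X | (0 : X × X × X) ∈ LC θt γ A B z}
        = {z : X × X × X | ∃ u a : X, a ∈ A u ∧ -a ∈ B u ∧ z = (u, u, u + γ • a)})
    ∧ ∀ u xx : X, (0 : X × X × X) ∈ LC θt γ A B (u, u, xx) →
        (∃ a ∈ A u, ∃ b ∈ B u, a + b = 0) ∧ xx - u ∈ γ • A u := by
  have key := zero_mem_LC_iff A B γ θt hγ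
  refine ⟨?_, ?_, ?_⟩
  · ext ⟨u, v, x⟩
    simp only [Set.mem_setOf_eq, key]
    constructor
    · rintro ⟨rfl, a, ha, hb, rfl⟩
      refine ⟨v, _, rfl, ?_⟩
      rw [add_sub_cancel_left, inv_smul_smul₀ hγ.ne']
      exact ⟨ha, hb⟩
    · rintro ⟨w, y, h, ha, hb⟩
      simp only [Prod.mk.injEq] at h
      obtain ⟨rfl, rfl, rfl⟩ := h
      refine ⟨rfl, _, ha, hb, ?_⟩
      rw [smul_inv_smul₀ hγ.ne', add_sub_cancel]
  · ext ⟨u, v, x⟩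
    simp only [Set.mem_setOf_eq, key]
    constructor
    · rintro ⟨rfl, a, ha, hb, rfl⟩
      exact ⟨v, a, ha, hb, rfl⟩
    · rintro ⟨w, a, ha, hb, h⟩
      simp only [Prod.mk.injEq] at h
      obtain ⟨rfl, rfl, rfl⟩ := h
      exact ⟨rfl, a, ha, hb, rfl⟩
  · intro u x h
    obtain ⟨-, a, ha, hb, rfl⟩ := (key u u x).mp h
    refine ⟨⟨a, ha, -a, hb, add_neg_cancel a⟩, ?_⟩
    rw [add_sub_cancel_left]
    exact Set.smul_mem_smul_set ha
end

section
/- Let 𝒳 be a finite-dimensional real inner product space, β ≥ 0, A, B : 𝒳 ⇉ 𝒳 maximal β-strongly monotone operators, γ > 0 and θ̃ > 0. Then: (a) for every z = (u,v,x) and z′ = (u′,v′,x′) in 𝒵 := 𝒳³, ⟨ℒ_{θ̃}(z − z′), z − z′⟩ = (1 − θ̃)‖(u−u′) − (v−v′)‖², and for every r ∈ (ℒ_{θ̃} + γC)(z) and r′ ∈ (ℒ_{θ̃} + γC)(z′), ⟨r − r′, z − z′⟩ ≥ (1 − θ̃)‖(u−u′) − (v−v′)‖² + γβ(‖u−u′‖²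 + ‖v−v′‖²); (b) ℒ_{θ̃} + γC is maximal monotone whenever θ̃ ∈ (0, θ₀], where θ₀ := 1 + γβ/2. -/
open RealInnerProductSpace Filter Pointwise

/-- Finite intersection lemma behind Minty's theorem. -/
theorem aux_finite {X : Type*} [NormedAddCommGroup X] [InnerProductSpace ℝ X]
    (s : Set (X × X)) (hs : s.Finite)
    (hm : ∀ g ∈ s, ∀ g' ∈ s, ⟪g.1 - g'.1, g.2 - g'.2⟫ ≤ (0 : ℝ)) :
    ∃ u : X, ∀ g ∈ s, ⟪u + g.1, u + g.2⟫ ≤ (0 : ℝ) := by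
  rcases s.eq_empty_or_nonempty with rfl | hne
  · exact ⟨0, by simp⟩
  set f : X × X → X × X × ℝ := fun g => (g.1, g.2, ⟪g.1, g.2⟫) with hf
  set K := convexHull ℝ (f '' s) with hK
  have hKc : IsCompact K := (hs.image f).isCompact_convexHull ℝ
  have hKne : K.Nonempty := (hne.image f).convexHull
  have hsub : ∀ g ∈ s, f g ∈ K := fun g hg => subset_convexHull ℝ _ ⟨g, hg, rfl⟩
  have key : ∀ (P Q : X) (C : ℝ),
      (∀ g ∈ s, ⟪g.1, g.2⟫ + C - ⟪P, g.2⟫ - ⟪g.1, Q⟫ ≤ (0 : ℝ)) →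
      ∀ k ∈ K, k.2.2 + C - ⟪P, k.2.1⟫ - ⟪k.1, Q⟫ ≤ (0 : ℝ) := by
    intro P Q C h
    have hc : Convex ℝ {k : X × X × ℝ | k.2.2 + C - ⟪P, k.2.1⟫ - ⟪k.1, Q⟫ ≤ (0 : ℝ)} := by
      intro x hx y hy a b ha hb hab
      simp only [Set.mem_ofPred_eq, Prod.snd_add, Prod.fst_add, Prod.smul_snd, Prod.smul_fst,
        inner_add_left, inner_add_right, real_inner_smul_left, real_inner_smul_right,
        smul_eq_mul] at *
      obtain rfl : b = 1 - a := by linarith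
      nlinarith [mul_le_mul_of_nonneg_left hx ha, mul_le_mul_of_nonneg_left hy hb]
    exact fun k hk => convexHull_min (by rintro _ ⟨g, hg, rfl⟩; exact h g hg) hc hk
  have h1 : ∀ g ∈ s, ∀ k ∈ K, k.2.2 + ⟪g.1, g.2⟫ - ⟪g.1, k.2.1⟫ - ⟪k.1, g.2⟫ ≤ (0 : ℝ) := by
    intro g hg
    apply key
    intro g' hg'
    have := hm g hg g' hg'
    simp only [inner_sub_left, inner_sub_right] at this
    linarith
  have h2 : ∀ k ∈ K, k.2.2 ≤ ⟪k.1, k.2.1⟫ := by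
    intro k hk
    have := key k.1 k.2.1 k.2.2 (fun g hg => by linarith [h1 g hg k hk]) k hk
    linarith
  obtain ⟨k, hk, hmax⟩ := hKc.exists_isMaxOn hKne
    (f := fun k : X × X × ℝ => k.2.2 - ‖k.1 + k.2.1‖ ^ 2 / 4)
    (by fun_prop)
  refine ⟨-((1 / 2 : ℝ) • (k.1 + k.2.1)), fun g hg => ?_⟩
  obtain ⟨P, Q, C⟩ := k
  obtain ⟨p, q⟩ := g
  have hC := h2 _ hk
  simp only at hC ⊢
  have hD : ∀ t : ℝ, 0 < t → t ≤ 1 →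
      (⟪p, q⟫ - C - ⟪P + Q, (p + q) - (P + Q)⟫ / 2)
        ≤ t * (‖(p + q) - (P + Q)‖ ^ 2 / 4) := by
    intro t ht ht1
    have hmem : (1 - t) • (P, Q, C) + t • f (p, q) ∈ K :=
      convex_convexHull ℝ _ hk (hsub _ hg) (by linarith) ht.le (by ring)
    have h := hmax hmem
    simp only [hf, Set.mem_ofPred_eq, Prod.snd_add, Prod.fst_add, Prod.smul_mk, smul_eq_mul] at h
    have e : (1 - t) • P + t • p + ((1 - t) • Q + t • q)
        = (P + Q) + t • ((p + q) - (P + Q)) := by module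
    rw [e, norm_add_sq_real, norm_smul, mul_pow, real_inner_smul_right, Real.norm_eq_abs,
      sq_abs] at h
    have : t * (⟪p, q⟫ - C - ⟪P + Q, (p + q) - (P + Q)⟫ / 2)
        ≤ t * (t * (‖(p + q) - (P + Q)‖ ^ 2 / 4)) := by nlinarith
    exact le_of_mul_le_mul_left this ht
  have hD0 : ⟪p, q⟫ - C - ⟪P + Q, (p + q) - (P + Q)⟫ / 2 ≤ (0 : ℝ) := by
    set D := ⟪p, q⟫ - C - ⟪P + Q, (p + q) - (P + Q)⟫ / 2
    set N := ‖(p + q) - (P + Q)‖ ^ 2 / 4 with hN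
    have hN0 : 0 ≤ N := by positivity
    by_contra! hpos
    have := hD (min 1 (D / (2 * (N + 1)))) (lt_min one_pos (by positivity)) (min_le_left _ _)
    have h3 : min 1 (D / (2 * (N + 1))) * N ≤ D / (2 * (N + 1)) * N := by
      gcongr; exact min_le_right _ _
    have h4 : D / (2 * (N + 1)) * N ≤ D / 2 := by
      rw [div_mul_eq_mul_div, div_le_div_iff₀ (by positivity) (by norm_num)]
      nlinarith
    linarith
  have hn : (0 : ℝ) ≤ ⟪P - Q, P - Q⟫ := real_inner_self_nonneg
  simp only [inner_sub_left, inner_sub_right, inner_add_left, inner_add_right, inner_neg_left,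
    inner_neg_right, real_inner_smul_left, real_inner_smul_right] at *
  linarith [real_inner_comm P Q, real_inner_comm P p, real_inner_comm P q, real_inner_comm Q p,
    real_inner_comm Q q]

/-- Infinite version, by compactness. -/
theorem aux_inf {X : Type*} [NormedAddCommGroup X] [InnerProductSpace ℝ X]
    [FiniteDimensional ℝ X] (s : Set (X × X))
    (hm : ∀ g ∈ s, ∀ g' ∈ s, ⟪g.1 - g'.1, g.2 - g'.2⟫ ≤ (0 : ℝ)) :
    ∃ u : X, ∀ g ∈ s, ⟪u + g.1, u + g.2⟫ ≤ (0 : ℝ) := by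
  classical
  rcases s.eq_empty_or_nonempty with rfl | ⟨g0, hg0⟩
  · exact ⟨0, by simp⟩
  let t : X × X → Set X := fun g => {u | ⟪u + g.1, u + g.2⟫ ≤ (0 : ℝ)}
  have htc : ∀ g, IsClosed (t g) := fun g => isClosed_le (by fun_prop) continuous_const
  have hcomp : IsCompact (t g0) := by
    refine (isCompact_closedBall (-((1 / 2 : ℝ) • (g0.1 + g0.2))) (‖g0.1 - g0.2‖ / 2)).of_isClosed_subset
      (htc _) ?_
    intro u hu
    rw [mem_closedBall_iff_norm]
    refine le_of_sq_le_sq ?_ (by positivity)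
    rw [div_pow, ← real_inner_self_eq_norm_sq, ← real_inner_self_eq_norm_sq]
    have hu' : ⟪u + g0.1, u + g0.2⟫ ≤ (0 : ℝ) := hu
    simp only [inner_sub_left, inner_sub_right, inner_add_left, inner_add_right, inner_neg_left,
      inner_neg_right, real_inner_smul_left, real_inner_smul_right] at *
    linarith [real_inner_comm g0.1 g0.2, real_inner_comm u g0.1, real_inner_comm u g0.2]
  obtain ⟨u, -, hu⟩ := hcomp.inter_iInter_nonempty (fun g : s => t g) (fun g => htc g) (by
    intro F
    obtain ⟨u, hu⟩ := aux_finite (insert g0 ((fun g : s => (g : X × X)) '' (F : Set s)))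
      ((F.finite_toSet.image _).insert _) (by
        have hsub : ∀ g ∈ insert g0 ((fun g : s => (g : X × X)) '' (F : Set s)), g ∈ s := by
          rintro g (rfl | ⟨g', -, rfl⟩)
          · exact hg0
          · exact g'.2
        intro g hg g' hg'
        exact hm g (hsub g hg) g' (hsub g' hg'))
    refine ⟨u, hu _ (Set.mem_insert _ _), ?_⟩
    simp only [Set.mem_iInter]
    intro g hg
    exact hu _ (Set.mem_insert_of_mem _ ⟨g, hg, rfl⟩))
  simp only [Set.mem_iInter] at hu
  exact ⟨u, fun g hg => hu ⟨g, hg⟩⟩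

theorem aux_max {X : Type*} [NormedAddCommGroup X] [InnerProductSpace ℝ X]
    {β : ℝ} (hβ : 0 ≤ β) {A : X → Set X} (hA : MaxStrMono β A) (u w : X)
    (h : ∀ a a', a' ∈ A a → (0 : ℝ) ≤ ⟪w - a', u - a⟫) : w ∈ A u := by
  have hT := hA.2 (fun x => A x ∪ {w' | x = u ∧ w' = w}) (by
    have h0 : ∀ x x' w w', w ∈ A x → w' ∈ A x' → (0 : ℝ) ≤ ⟪w - w', x - x'⟫ :=
      fun x x' w w' h1 h2 => le_trans (by positivity) (hA.1 x x' w w' h1 h2)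
    rintro x x' v v' (h1 | ⟨rfl, rfl⟩) (h2 | ⟨rfl, rfl⟩)
    · simpa using h0 _ _ _ _ h1 h2
    · have := h _ _ h1
      rw [← neg_sub v, ← neg_sub x, inner_neg_neg] at this
      simpa using this
    · simpa using h _ _ h2
    · simp) (fun x => Set.subset_union_left)
  rw [← hT]
  exact Or.inr ⟨rfl, rfl⟩

/-- Minty's theorem. -/
theorem aux_minty {X : Type*} [NormedAddCommGroup X] [InnerProductSpace ℝ X]
    [FiniteDimensional ℝ X] {β : ℝ} (hβ : 0 ≤ β) {A : X → Set X} (hA : MaxStrMono β A)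
    (l : ℝ) (hl : 0 < l) (y : X) : ∃ u, ∃ a ∈ A u, y = u + l • a := by
  obtain ⟨u, hu⟩ := aux_inf {g : X × X | ∃ a a', a' ∈ A a ∧ g = (l • a' - y, -a)} (by
    rintro _ ⟨a, a', h, rfl⟩ _ ⟨b, b', h', rfl⟩
    have h3 : (0 : ℝ) ≤ ⟪a' - b', a - b⟫ := le_trans (by positivity) (hA.1 _ _ _ _ h h')
    have e1 : l • a' - y - (l • b' - y) = l • (a' - b') := by module
    have e2 : -a - -b = -(a - b) := by abel
    simp only [e1, e2, real_inner_smul_left, inner_neg_right]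
    nlinarith)
  refine ⟨u, l⁻¹ • (y - u), aux_max hβ hA _ _ ?_, ?_⟩
  · intro a a' h
    have h1 := hu _ ⟨a, a', h, rfl⟩
    have e1 : u + (l • a' - y) = -(l • (l⁻¹ • (y - u) - a')) := by
      rw [smul_sub, smul_inv_smul₀ hl.ne']; abel
    simp only [e1, ← sub_eq_add_neg, inner_neg_left, real_inner_smul_left] at h1
    exact nonneg_of_mul_nonneg_right (by linarith) hl
  · rw [smul_inv_smul₀ hl.ne']; abel

theorem aux_L {X : Type*} [NormedAddCommGroup X] [InnerProductSpace ℝ X] (θ : ℝ)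
    (z : X × X × X) : inner3 (Lmap θ z) z = (1 - θ) * ‖z.1 - z.2.1‖ ^ 2 := by
  obtain ⟨u, v, x⟩ := z
  simp only [inner3, Lmap, ← real_inner_self_eq_norm_sq, inner_sub_left, inner_sub_right,
    inner_add_left, real_inner_smul_left]
  rw [real_inner_comm u v, real_inner_comm u x, real_inner_comm v x]
  ring

theorem aux_bound {X : Type*} [NormedAddCommGroup X] [InnerProductSpace ℝ X]
    (β : ℝ) (A B : X → Set X) (hA : StrMono β A) (hB : StrMono β B)
    (γ θt : ℝ) (hγ : 0 < γ) (z z' rr rr' : X × X × X)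
    (h : rr ∈ LC θt γ A B z) (h' : rr' ∈ LC θt γ A B z') :
    (1 - θt) * ‖(z.1 - z'.1) - (z.2.1 - z'.2.1)‖ ^ 2
            + γ * β * (‖z.1 - z'.1‖ ^ 2 + ‖z.2.1 - z'.2.1‖ ^ 2)
          ≤ inner3 (rr - rr') (z - z') := by
  obtain ⟨a, ha, b, hb, rfl⟩ := h
  obtain ⟨a', ha', b', hb', rfl⟩ := h'
  have h1 := mul_le_mul_of_nonneg_left (hA _ _ _ _ ha ha') hγ.le
  have h2 := mul_le_mul_of_nonneg_left (hB _ _ _ _ hb hb') hγ.le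
  have e : Lmap θt z + γ • ((a, b, (0 : X)) : X × X × X)
      - (Lmap θt z' + γ • ((a', b', (0 : X)) : X × X × X))
      = Lmap θt (z - z') + (γ • (a - a'), γ • (b - b'), 0) := by
    ext <;> simp [Lmap] <;> module
  have e2 : inner3 (Lmap θt (z - z') + (γ • (a - a'), γ • (b - b'), 0)) (z - z')
      = inner3 (Lmap θt (z - z')) (z - z') + γ * ⟪a - a', z.1 - z'.1⟫
        + γ * ⟪b - b', z.2.1 - z'.2.1⟫ := by
    simp only [inner3, Prod.fst_add, Prod.snd_add, inner_add_left, real_inner_smul_left,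
      Prod.fst_sub, Prod.snd_sub, inner_zero_left]
    ring
  rw [e, e2, aux_L]
  simp only [Prod.fst_sub, Prod.snd_sub]
  linarith

theorem aux_comm3 {X : Type*} [NormedAddCommGroup X] [InnerProductSpace ℝ X]
    (z z' : X × X × X) : inner3 z z' = inner3 z' z := by
  simp only [inner3, real_inner_comm]

/-- (a) the quadratic identity for `ℒ_θ̃` and the strong monotonicity
lower bound for `ℒ_θ̃ + γC`; (b) `ℒ_θ̃ + γC` is maximal monotone for `θ̃ ∈ (0, 1 + γβ/2]`. -/
theorem stmt12 {X : Type*} [NormedAddCommGroup X] [InnerProductSpace ℝ X]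
    [FiniteDimensional ℝ X]
    (β : ℝ) (hβ : 0 ≤ β) (A B : X → Set X)
    (hA : MaxStrMono β A) (hB : MaxStrMono β B)
    (γ θt : ℝ) (hγ : 0 < γ) (hθt : 0 < θt) :
    (∀ z z' : X × X × X,
        inner3 (Lmap θt (z - z')) (z - z')
          = (1 - θt) * ‖(z.1 - z'.1) - (z.2.1 - z'.2.1)‖ ^ 2)
    ∧ (∀ z z' rr rr' : X × X × X, rr ∈ LC θt γ A B z → rr' ∈ LC θt γ A B z' →
        (1 - θt) * ‖(z.1 - z'.1) - (z.2.1 - z'.2.1)‖ ^ 2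
            + γ * β * (‖z.1 - z'.1‖ ^ 2 + ‖z.2.1 - z'.2.1‖ ^ 2)
          ≤ inner3 (rr - rr') (z - z'))
    ∧ (θt ≤ 1 + γ * β / 2 → MaxMono3 (LC θt γ A B)) := by
  refine ⟨fun z z' => aux_L θt (z - z'),
    fun z z' rr rr' h h' => aux_bound β A B hA.1 hB.1 γ θt hγ z z' rr rr' h h',
    fun hθ => ⟨?_, ?_⟩⟩
  · intro z z' t t' h h'
    have h1 := aux_bound β A B hA.1 hB.1 γ θt hγ z z' t t' h h'
    rw [aux_comm3]
    refine le_trans ?_ h1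
    have hp := parallelogram_law_with_norm ℝ (z.1 - z'.1) (z.2.1 - z'.2.1)
    set p := z.1 - z'.1
    set q := z.2.1 - z'.2.1
    have hb : 0 ≤ γ * β := by positivity
    have h3 : ‖p - q‖ ^ 2 ≤ 2 * (‖p‖ ^ 2 + ‖q‖ ^ 2) := by
      nlinarith [sq_nonneg ‖p + q‖]
    nlinarith [mul_le_mul_of_nonneg_left h3 hb,
      mul_le_mul_of_nonneg_right hθ (sq_nonneg ‖p - q‖)]
  · intro T' hT' hsub
    funext z
    refine Set.Subset.antisymm ?_ (hsub z)
    intro t ht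
    obtain ⟨u, v, x⟩ := z
    obtain ⟨t1, t2, t3⟩ := t
    -- solve `M z' + t' = M z + t` with `M = diag (1, 1, 1/θ)`
    obtain ⟨u', a, ha, hu⟩ := aux_minty hβ hA (γ / 2) (by positivity)
      ((1 / 2 : ℝ) • (u + t1 + x + θt • t3))
    obtain ⟨v', b, hb, hv⟩ := aux_minty hβ hB (γ / 2) (by positivity)
      ((1 / 2 : ℝ) • (v + t2 + (2 : ℝ) • u' - x - θt • t3))
    set x' := x + θt • (t3 - (u' - v')) with hx'
    have hmem : Lmap θt (u', v', x') + γ • ((a, b, (0 : X)) : X × X × X)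
        ∈ LC θt γ A B (u', v', x') := ⟨a, ha, b, hb, rfl⟩
    have hmono := hT' _ _ _ _ ht (hsub _ hmem)
    have hu2 : u + t1 + x + θt • t3 = (2 : ℝ) • u' + γ • a := by
      calc _ = (2 : ℝ) • ((1 / 2 : ℝ) • (u + t1 + x + θt • t3)) := by module
        _ = _ := by rw [hu]; module
    have hv2 : v + t2 + (2 : ℝ) • u' - x - θt • t3 = (2 : ℝ) • v' + γ • b := by
      calc _ = (2 : ℝ) • ((1 / 2 : ℝ) • (v + t2 + (2 : ℝ) • u' - x - θt • t3)) := by module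
        _ = _ := by rw [hv]; module
    have ht1 : t1 = (2 : ℝ) • u' + γ • a - u - x - θt • t3 := by rw [← hu2]; abel
    have ht2 : t2 = (2 : ℝ) • v' + γ • b - v - (2 : ℝ) • u' + x + θt • t3 := by
      rw [← hv2]; abel
    have e1 : t1 - ((1 - θt) • u' + θt • v' - x' + γ • a) = -(u - u') := by
      rw [ht1, hx']; module
    have e2 : t2 - ((θt - 2) • u' + (1 - θt) • v' + x' + γ • b) = -(v - v') := by
      rw [ht2, hx']; module
    have e3 : t3 - (u' - v' + γ • (0 : X)) = -(θt⁻¹ • (x - x')) := by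
      rw [hx', show x - (x + θt • (t3 - (u' - v'))) = -(θt • (t3 - (u' - v'))) by abel,
        smul_neg, inv_smul_smul₀ hθt.ne']
      simp
    simp only [inner3, Lmap, Prod.fst_sub, Prod.snd_sub, Prod.fst_add, Prod.snd_add,
      Prod.smul_fst, Prod.smul_snd] at hmono
    rw [e1, e2, e3] at hmono
    simp only [inner_neg_right, real_inner_smul_right, real_inner_self_eq_norm_sq] at hmono
    have hi : 0 < θt⁻¹ := inv_pos.mpr hθt
    have n1 := sq_nonneg ‖u - u'‖
    have n2 := sq_nonneg ‖v - v'‖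
    have n3 := mul_nonneg hi.le (sq_nonneg ‖x - x'‖)
    have z1 : ‖u - u'‖ ^ 2 = 0 := by linarith
    have z2 : ‖v - v'‖ ^ 2 = 0 := by linarith
    have z3 : θt⁻¹ * ‖x - x'‖ ^ 2 = 0 := by linarith
    have z3' : ‖x - x'‖ ^ 2 = 0 := (mul_eq_zero.mp z3).resolve_left hi.ne'
    have w1 : u - u' = 0 := by simpa using z1
    have w2 : v - v' = 0 := by simpa using z2
    have w3 : x - x' = 0 := by simpa using z3'
    rw [w1, neg_zero, sub_eq_zero] at e1
    rw [w2, neg_zero, sub_eq_zero] at e2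
    rw [w3, smul_zero, smul_zero, neg_zero, sub_eq_zero] at e3
    rw [sub_eq_zero] at w1 w2 w3
    rw [e1, e2, e3, w1, w2, w3]
    simpa [Lmap] using hmem
end

section
/- Let 𝒳 be a finite-dimensional real inner product space, β ≥ 0, A, B : 𝒳 ⇉ 𝒳 maximal β-strongly monotone, γ > 0, θ > 0, and let {(u_k, v_k, x_k)} be generated by the relaxed PR splitting method from x₀ ∈ 𝒳. Set θ₀ := 1 + γβ/2, θ̃ := min{θ, θ₀}, x̃_k := x_{k−1} + θ̃(v_k − u_k), z_k := (u_k, v_k, x_k), z̃_k := (u_k, v_k, x̃_k), a_k := (x_{k−1} − u_k)/γ, b_k := (2u_k − v_k − x_{k−1})/γ, and let w(u,v,x) := ‖x‖²/(2θ) on 𝒵 := 𝒳³ with Bregman distance (dw)_z(z′) := w(z′) − w(z) − ⟨∇w(z), z′−z⟩ and r_k := ∇(dw)_{z_k}(z_{k−1}) = ∇w(z_{k−1}) − ∇w(z_k). Then for every k ≥ 1: (a) r_k = (0, 0, (x_{k−1} − x_k)/θ) = (0, 0, u_k − v_k) = γ(0, 0, a_k + b_k); (b) r_k ∈ (ℒ_{θ̃}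 + γC)(z̃_k); and (c) (dw)_{z_k}(z̃_k) = (θ/θ̃ − 1)² (dw)_{z_{k−1}}(z̃_k), i.e., the HPE error criterion (dw)_{z_k}(z̃_k) + λ_k ε_k ≤ σ (dw)_{z_{k−1}}(z̃_k) holds with λ_k = 1, ε_k = 0 and σ = (θ/θ̃ − 1)². -/
open RealInnerProductSpace Filter Pointwise

/-- The distance generating function `w(u,v,x) := ‖x‖²/(2θ)` on `𝒵 = 𝒳³`. -/
noncomputable def w3 {X : Type*} [NormedAddCommGroup X] [InnerProductSpace ℝ X]
    (θ : ℝ) (z : X × X × X) : ℝ := ‖z.2.2‖ ^ 2 / (2 * θ)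

/-- The gradient of `w3 θ`: `∇w(u,v,x) = (0, 0, x/θ)`. -/
noncomputable def gradw3 {X : Type*} [NormedAddCommGroup X] [InnerProductSpace ℝ X]
    (θ : ℝ) (z : X × X × X) : X × X × X := ((0 : X), (0 : X), θ⁻¹ • z.2.2)

/-- The Bregman distance of `w3 θ`: `(dw)_z(z') := w(z') − w(z) − ⟨∇w(z), z'−z⟩`. -/
noncomputable def dw3 {X : Type*} [NormedAddCommGroup X] [InnerProductSpace ℝ X]
    (θ : ℝ) (z z' : X × X × X) : ℝ :=
  w3 θ z' - w3 θ z - inner3 (gradw3 θ z) (z' - z)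

/-- Closed form of the Bregman distance. -/
theorem dw3_eq {X : Type*} [NormedAddCommGroup X] [InnerProductSpace ℝ X]
    (θ : ℝ) (hθ : 0 < θ) (z z' : X × X × X) :
    dw3 θ z z' = ‖z'.2.2 - z.2.2‖ ^ 2 / (2 * θ) := by
  simp only [dw3, w3, inner3, gradw3, inner_zero_left, Prod.snd_sub, real_inner_smul_left,
    inner_sub_right, real_inner_self_eq_norm_sq, norm_sub_sq_real]
  rw [real_inner_comm z.2.2 z'.2.2]
  field_simp
  ring

/-- The relaxed PR splitting method is an NE-HPE instance for the
inclusion `0 ∈ (ℒ_θ̃ + γC)(z)` with `λ_k = 1`, `ε_k = 0` and `σ = (θ/θ̃ − 1)²`. -/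
theorem stmt14 {X : Type*} [NormedAddCommGroup X] [InnerProductSpace ℝ X]
    [FiniteDimensional ℝ X]
    (β : ℝ) (hβ : 0 ≤ β) (A B : X → Set X)
    (hA : MaxStrMono β A) (hB : MaxStrMono β B)
    (γ θ : ℝ) (hγ : 0 < γ) (hθ : 0 < θ)
    (θ0 : ℝ) (hθ0 : θ0 = 1 + γ * β / 2) (θt : ℝ) (hθt : θt = min θ θ0)
    (x u v : ℕ → X) (hpr : RPR A B γ θ x u v)
    (a b : ℕ → X)
    (ha : ∀ k, a k = γ⁻¹ • (x (k - 1) - u k))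
    (hb : ∀ k, b k = γ⁻¹ • ((2 : ℝ) • u k - v k - x (k - 1)))
    (xt : ℕ → X) (hxt : ∀ k, xt k = x (k - 1) + θt • (v k - u k))
    (r : ℕ → X × X × X)
    (hr : ∀ k, r k = gradw3 θ (u (k - 1), v (k - 1), x (k - 1)) - gradw3 θ (u k, v k, x k)) :
    ∀ k, 1 ≤ k →
      (r k = (((0 : X), (0 : X), θ⁻¹ • (x (k - 1) - x k)) : X × X × X)
        ∧ r k = (((0 : X), (0 : X), u k - v k) : X × X × X)
        ∧ r k = γ • (((0 : X), (0 : X), a k + b k) : X × X × X))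
      ∧ r k ∈ LC θt γ A B (u k, v k, xt k)
      ∧ (dw3 θ (u k, v k, x k) (u k, v k, xt k)
            = (θ / θt - 1) ^ 2 * dw3 θ (u (k - 1), v (k - 1), x (k - 1)) (u k, v k, xt k)
        ∧ dw3 θ (u k, v k, x k) (u k, v k, xt k) + 1 * 0
            ≤ (θ / θt - 1) ^ 2 * dw3 θ (u (k - 1), v (k - 1), x (k - 1)) (u k, v k, xt k)) := by
  intro k hk
  have hθ0pos : 0 < θ0 := by rw [hθ0]; positivity
  have hθtpos : 0 < θt := by rw [hθt]; exact lt_min hθ hθ0pos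
  have hstep := hpr.step k hk
  have h1 : r k = (((0 : X), (0 : X), θ⁻¹ • (x (k - 1) - x k)) : X × X × X) := by
    rw [hr k]
    simp [gradw3, smul_sub]
  have h2 : r k = (((0 : X), (0 : X), u k - v k) : X × X × X) := by
    rw [h1, hstep]
    have : x (k - 1) - (x (k - 1) + θ • (v k - u k)) = θ • (u k - v k) := by module
    rw [this, smul_smul, inv_mul_cancel₀ hθ.ne', one_smul]
  have h3 : r k = γ • (((0 : X), (0 : X), a k + b k) : X × X × X) := by
    rw [h2, ha k, hb k, ← smul_add]
    simp only [Prod.smul_mk, smul_zero, smul_smul, mul_inv_cancel₀ hγ.ne', one_smul]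
    congr 2
    module
  have h4 : dw3 θ (u k, v k, x k) (u k, v k, xt k)
      = (θ / θt - 1) ^ 2
        * dw3 θ (u (k - 1), v (k - 1), x (k - 1)) (u k, v k, xt k) := by
    rw [dw3_eq θ hθ, dw3_eq θ hθ]
    simp only
    have e1 : xt k - x k = (θt - θ) • (v k - u k) := by rw [hxt k, hstep]; module
    have e2 : xt k - x (k - 1) = θt • (v k - u k) := by rw [hxt k]; module
    rw [e1, e2, norm_smul, norm_smul, mul_pow, mul_pow, Real.norm_eq_abs, Real.norm_eq_abs,
      sq_abs, sq_abs]
    field_simp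
    ring
  refine ⟨⟨h1, h2, h3⟩, ?_, h4, by rw [h4]; simp⟩
  obtain ⟨a', ha', hae⟩ := Set.mem_smul_set.mp (hpr.resA k hk)
  obtain ⟨b', hb', hbe⟩ := Set.mem_smul_set.mp (hpr.resB k hk)
  refine ⟨a', ha', b', hb', ?_⟩
  rw [h2]
  simp only [Lmap, Prod.smul_mk, Prod.mk_add_mk, hae, hbe, hxt k, smul_zero, add_zero]
  refine Prod.ext ?_ (Prod.ext ?_ rfl)
  · simp only
    module
  · simp only
    module
end

section
/- Let 𝒳 be a finite-dimensional real inner product space, β ≥ 0, A, B : 𝒳 ⇉ 𝒳 maximal β-strongly monotone, γ > 0, θ₀ := 1 + γβ/2, and assume θ ∈ (0, 2θ₀]. Let {x_k} be generated by the relaxed PR splitting method from x₀ ∈ 𝒳. Then for every k ≥ 2, ‖x_k − x_{k−1}‖ ≤ ‖x_{k−1} − x_{k−2}‖. -/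
open RealInnerProductSpace Filter Pointwise

/-- Strong monotonicity scaled by `γ`. -/
lemma strMono_smul {X : Type*} [NormedAddCommGroup X] [InnerProductSpace ℝ X]
    {β γ : ℝ} {T : X → Set X} (hT : StrMono β T) (hγ : 0 < γ) {x x' w w' : X}
    (hw : w ∈ γ • T x) (hw' : w' ∈ γ • T x') :
    γ * β * ‖x - x'‖ ^ 2 ≤ ⟪w - w', x - x'⟫ := by
  obtain ⟨a, ha, rfl⟩ := hw
  obtain ⟨a', ha', rfl⟩ := hw'
  have h := mul_le_mul_of_nonneg_left (hT x x' a a' ha ha') hγ.le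
  simp only [← smul_sub, real_inner_smul_left]
  linarith

/-- The key one-step inequality in terms of differences. -/
lemma key_step {X : Type*} [NormedAddCommGroup X] [InnerProductSpace ℝ X]
    (s θ : ℝ) (hs : 0 ≤ s) (hθ : 0 < θ) (hle : θ ≤ 2 + s) (p a b : X)
    (h1 : s * ‖a‖ ^ 2 ≤ ⟪p - a, a⟫) (h2 : s * ‖b‖ ^ 2 ≤ ⟪(2 : ℝ) • a - p - b, b⟫) :
    ‖p + θ • (b - a)‖ ≤ ‖p‖ := by
  apply le_of_sq_le_sq _ (norm_nonneg _)
  have e1 := norm_add_sq_real p (θ • (b - a))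
  rw [norm_smul, mul_pow, Real.norm_eq_abs, sq_abs, real_inner_smul_right, inner_sub_right] at e1
  have e2 := norm_sub_sq_real b a
  have e3 := norm_add_sq_real b a
  simp only [inner_sub_left, real_inner_smul_left, real_inner_self_eq_norm_sq] at h1 h2
  rw [real_inner_comm b a] at h2
  have h3 : 2 * (⟪p, b⟫ - ⟪p, a⟫) + (2 + s) * ‖b - a‖ ^ 2 ≤ 0 := by
    have := mul_nonneg hs (sq_nonneg ‖b + a‖)
    rw [e3] at this
    rw [e2]
    nlinarith
  have h4 := mul_le_mul_of_nonneg_right hle (sq_nonneg ‖b - a‖)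
  have h5 : θ * (2 * (⟪p, b⟫ - ⟪p, a⟫) + θ * ‖b - a‖ ^ 2) ≤ 0 :=
    mul_nonpos_of_nonneg_of_nonpos hθ.le (by linarith)
  rw [e1]
  linarith

/-- For `θ ∈ (0, 2θ₀]` with `θ₀ = 1 + γβ/2`, the stepsizes
`‖x_k − x_{k−1}‖` of the relaxed PR splitting method are non-increasing. -/
theorem stmt15 {X : Type*} [NormedAddCommGroup X] [InnerProductSpace ℝ X]
    [FiniteDimensional ℝ X]
    (β : ℝ) (hβ : 0 ≤ β) (A B : X → Set X)
    (hA : MaxStrMono β A) (hB : MaxStrMono β B)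
    (γ θ θ0 : ℝ) (hγ : 0 < γ) (hθ0 : θ0 = 1 + γ * β / 2)
    (hθpos : 0 < θ) (hθle : θ ≤ 2 * θ0)
    (x u v : ℕ → X) (hpr : RPR A B γ θ x u v) :
    ∀ k, 2 ≤ k → ‖x k - x (k - 1)‖ ≤ ‖x (k - 1) - x (k - 2)‖ := by
  intro k hk
  obtain ⟨n, rfl⟩ := Nat.exists_eq_add_of_le' hk
  have a1 := hpr.resA (n + 1) (by omega)
  have a2 := hpr.resA (n + 2) (by omega)
  have b1 := hpr.resB (n + 1) (by omega)
  have b2 := hpr.resB (n + 2) (by omega)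
  have s1 := hpr.step (n + 1) (by omega)
  have s2 := hpr.step (n + 2) (by omega)
  have i1 : n + 2 - 1 = n + 1 := by omega
  have i2 : n + 1 - 1 = n := by omega
  have i3 : n + 2 - 2 = n := by omega
  rw [i1] at a2 b2 s2
  rw [i2] at a1 b1 s1
  rw [i1, i3]
  have h1 := strMono_smul hA.1 hγ a2 a1
  have h2 := strMono_smul hB.1 hγ b2 b1
  have key := key_step (γ * β) θ (by positivity) hθpos (by rw [hθ0] at hθle; linarith)
    (x (n + 1) - x n) (u (n + 2) - u (n + 1)) (v (n + 2) - v (n + 1))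
    (by convert h1 using 2; abel)
    (by convert h2 using 2; module)
  have e : x (n + 2) - x (n + 1) = x (n + 1) - x n +
      θ • (v (n + 2) - v (n + 1) - (u (n + 2) - u (n + 1))) := by
    have s1' : x (n + 1) - x n = θ • (v (n + 1) - u (n + 1)) := by rw [s1]; abel
    rw [s1', s2]
    module
  rw [e]
  exact key
end
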